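/- arXiv:0903.3395 — 5 statements merged into one kernel-verified Lean document; each statement's English description precedes it below -/
import Mathlib

section
/- There is a constant C > 0 such that for every 1 ≤ p ≤ ∞ and every integer n ≥ 2 the following holds with r = (1/C)·(log n / n)^{1 - 1/min(p,2)}: for every bounded holomorphic function f on the open unit ball B of ℓ_p^n with monomial expansion f(z) = ∑_{α ∈ ℕ₀^n} a_α z^α, and for every z ∈ ℂ^n with ‖z‖_p ≤ r, one has ∑_{α ∈ ℕ₀^n} |a_α z^α| ≤ sup_{w ∈ B} |f(w)|. In particular the Bohr radius of B_{ℓ_p^n} is at least (1/C)(log n/n)^{1-1/min(p,2)}. -/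
open Finset
open scoped ENNReal

/-- The `ℓ_p`-norm of a vector in `ℂ^n`, for `1 ≤ p ≤ ∞`. -/
noncomputable def pNorm (p : ℝ≥0∞) {n : ℕ} (z : Fin n → ℂ) : ℝ :=
  if p = ∞ then ⨆ i, ‖z i‖ else (∑ i, ‖z i‖ ^ p.toReal) ^ (1 / p.toReal)

/-- The monomial `z^α`. -/
noncomputable def mono {n : ℕ} (z : Fin n → ℂ) (α : Fin n → ℕ) : ℂ := ∏ i, z i ^ α i

/-- Multi-indices of degree `m`. -/
noncomputable def idx (n m : ℕ) : Finset (Fin n → ℕ) := piAntidiag (univ : Finset (Fin n)) m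

lemma mem_idx {n m : ℕ} {α : Fin n → ℕ} : α ∈ idx n m ↔ ∑ i, α i = m := by
  simp [idx]

lemma mono_mul {n : ℕ} (x z : Fin n → ℂ) (α : Fin n → ℕ) :
    mono (fun i => x i * z i) α = mono x α * mono z α := by
  simp [mono, mul_pow, Finset.prod_mul_distrib]

lemma mono_add {n : ℕ} (z : Fin n → ℂ) (α β : Fin n → ℕ) :
    mono z (fun i => α i + β i) = mono z α * mono z β := by
  simp [mono, pow_add, Finset.prod_mul_distrib]

lemma mono_smul {n : ℕ} (c : ℂ) (z : Fin n → ℂ) (α : Fin n → ℕ) :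
    mono (fun i => c * z i) α = c ^ (∑ i, α i) * mono z α := by
  simp [mono, mul_pow, Finset.prod_mul_distrib, Finset.prod_pow_eq_pow_sum]

/-! ### Properties of the norm -/

lemma pNorm_eq {p : ℝ≥0∞} [Fact (1 ≤ p)] {n : ℕ} (z : Fin n → ℂ) :
    pNorm p z = ‖(WithLp.toLp p z : PiLp p (fun _ : Fin n => ℂ))‖ := by
  unfold pNorm
  split_ifs with h
  · subst h
    rw [PiLp.norm_eq_ciSup]
  · rw [PiLp.norm_eq_sum]
    exact ENNReal.toReal_pos (by have := Fact.out (p := 1 ≤ p); positivity) h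

lemma pNorm_nonneg {p : ℝ≥0∞} (hp : 1 ≤ p) {n : ℕ} (z : Fin n → ℂ) : 0 ≤ pNorm p z := by
  have : Fact (1 ≤ p) := ⟨hp⟩
  rw [pNorm_eq]; positivity

lemma pNorm_add {p : ℝ≥0∞} (hp : 1 ≤ p) {n : ℕ} (z w : Fin n → ℂ) :
    pNorm p (fun i => z i + w i) ≤ pNorm p z + pNorm p w := by
  have : Fact (1 ≤ p) := ⟨hp⟩
  rw [pNorm_eq, pNorm_eq, pNorm_eq]
  exact norm_add_le (WithLp.toLp p z : PiLp p (fun _ : Fin n => ℂ)) (WithLp.toLp p w)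

lemma pNorm_smul {p : ℝ≥0∞} (hp : 1 ≤ p) {n : ℕ} (c : ℂ) (z : Fin n → ℂ) :
    pNorm p (fun i => c * z i) = ‖c‖ * pNorm p z := by
  have : Fact (1 ≤ p) := ⟨hp⟩
  rw [pNorm_eq, pNorm_eq, ← norm_smul]
  rfl

lemma pNorm_mono {p : ℝ≥0∞} (hp : 1 ≤ p) {n : ℕ} {z w : Fin n → ℂ} (h : ∀ i, ‖z i‖ ≤ ‖w i‖) :
    pNorm p z ≤ pNorm p w := by
  unfold pNorm
  split_ifs with h'
  · rcases isEmpty_or_nonempty (Fin n) with hn | hn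
    · simp
    · exact ciSup_mono (Set.finite_range _).bddAbove h
  · have : 0 < p.toReal := ENNReal.toReal_pos (by positivity) h'
    gcongr with i
    exact h i

/-! ### Derivative -/

/-- coefficient of `∂_k P`. -/
noncomputable def dcoef {n : ℕ} (c : (Fin n → ℕ) → ℂ) (k : Fin n) (β : Fin n → ℕ) : ℂ :=
  ((β k : ℂ) + 1) * c (β + Pi.single k 1)

lemma single_mem {n m : ℕ} {β : Fin n → ℕ} (hβ : β ∈ idx n m) (k : Fin n) :
    β + Pi.single k 1 ∈ idx n (m+1) := by
  rw [mem_idx] at *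
  simp [Finset.sum_add_distrib, hβ]

lemma sum_shift {n m : ℕ} {E : Type*} [AddCommMonoid E] (k : Fin n) (F : (Fin n → ℕ) → E)
    (h0 : ∀ α, α k = 0 → F α = 0) :
    ∑ α ∈ idx n (m+1), F α = ∑ β ∈ idx n m, F (β + Pi.single k 1) := by
  symm
  apply Finset.sum_of_injOn (fun β => β + Pi.single k 1)
  · intro a _ b _ h
    exact add_right_cancel h
  · intro β hβ
    exact single_mem hβ k
  · intro α hα hn
    apply h0
    by_contra hk
    apply hn
    have hle : Pi.single k 1 ≤ α := by
      intro i
      by_cases hi : i = k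
      · subst hi; simp; omega
      · simp [hi]
    refine ⟨α - Pi.single k 1, ?_, ?_⟩
    · simp only [Finset.mem_coe]
      rw [mem_idx] at *
      have : ∑ i, (α - Pi.single k 1 : Fin n → ℕ) i + ∑ i, (Pi.single k 1 : Fin n → ℕ) i = m + 1 := by
        rw [← Finset.sum_add_distrib, ← hα]
        apply Finset.sum_congr rfl
        intro i _
        have : (Pi.single k 1 : Fin n → ℕ) i ≤ α i := hle i
        simp only [Pi.sub_apply]
        omega
      simp at this
      simpa using this
    · exact tsub_add_cancel_of_le hle
  · intro β _; rfl

lemma mono_hasDerivAt {n : ℕ} (z y : Fin n → ℂ) (α : Fin n → ℕ) :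
    HasDerivAt (fun t : ℂ => mono (fun i => z i + t * y i) α)
      (∑ k, (∏ j ∈ univ.erase k, z j ^ α j) * (α k * z k ^ (α k - 1) * y k)) 0 := by
  unfold mono
  have := HasDerivAt.fun_finsetProd (u := (univ : Finset (Fin n))) (x := (0:ℂ))
    (f := fun i (t : ℂ) => (z i + t * y i) ^ α i)
    (f' := fun i => (α i * z i ^ (α i - 1) * y i)) (by
      intro i _
      have h1 : HasDerivAt (fun t : ℂ => z i + t * y i) (y i) 0 := by
        simpa using ((hasDerivAt_id (0:ℂ)).mul_const (y i)).const_add (z i)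
      simpa using h1.fun_pow (α i))
  simpa using this

lemma mono_shift {n : ℕ} (z : Fin n → ℂ) (β : Fin n → ℕ) (k : Fin n) :
    (∏ j ∈ univ.erase k, z j ^ ((β + Pi.single k 1 : Fin n → ℕ) j)) *
      z k ^ ((β + Pi.single k 1 : Fin n → ℕ) k - 1) = mono z β := by
  unfold mono
  rw [← Finset.prod_erase_mul univ _ (Finset.mem_univ k)]
  congr 1
  · apply Finset.prod_congr rfl
    intro j hj
    simp [Finset.ne_of_mem_erase hj]
  · simp

lemma poly_hasDerivAt {n m : ℕ} (c : (Fin n → ℕ) → ℂ) (z y : Fin n → ℂ) :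
    HasDerivAt (fun t : ℂ => ∑ α ∈ idx n (m+1), c α * mono (fun i => z i + t * y i) α)
      (∑ k, y k * ∑ β ∈ idx n m, dcoef c k β * mono z β) 0 := by
  have h := HasDerivAt.fun_sum (u := idx n (m+1)) (fun α _ => (mono_hasDerivAt z y α).const_mul (c α))
  refine h.congr_deriv ?_
  symm
  simp_rw [Finset.mul_sum]
  conv_rhs => rw [Finset.sum_comm]
  apply Finset.sum_congr rfl
  intro k _
  rw [sum_shift k]
  · apply Finset.sum_congr rfl
    intro β _
    rw [← mono_shift z β k]
    simp [dcoef]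
    ring
  · intro α h; simp [h]

/-- Cauchy estimate for the directional derivative. -/
lemma deriv_bound {n m : ℕ} {p : ℝ≥0∞} (hp : 1 ≤ p) (c : (Fin n → ℕ) → ℂ) {A ρ : ℝ} (hρ : 0 < ρ)
    (hA : ∀ z s, 0 < s → pNorm p z ≤ s → ‖∑ α ∈ idx n (m+1), c α * mono z α‖ ≤ A * s ^ (m+1))
    (z y : Fin n → ℂ) (hz : pNorm p z ≤ 1) (hy : pNorm p y ≤ ρ) :
    ‖∑ k, y k * ∑ β ∈ idx n m, dcoef c k β * mono z β‖ ≤ A * 2 ^ (m+1) * ρ := by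
  rw [← (poly_hasDerivAt c z y).deriv]
  have := Complex.norm_deriv_le_of_forall_mem_sphere_norm_le (c := 0) (R := ρ⁻¹) (C := A * 2^(m+1))
    (f := fun t : ℂ => ∑ α ∈ idx n (m+1), c α * mono (fun i => z i + t * y i) α) (by positivity)
    (by
      apply Differentiable.diffContOnCl
      unfold mono
      fun_prop)
    (by
      intro t ht
      apply hA _ _ (by norm_num)
      refine (pNorm_add hp _ _).trans ?_
      rw [pNorm_smul hp]
      have : ‖t‖ = ρ⁻¹ := by simpa using ht
      rw [this]
      have : ρ⁻¹ * pNorm p y ≤ 1 := by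
        rw [inv_mul_le_iff₀ hρ]; simpa using hy
      linarith)
  simpa using this

/-! ### Discrete Fourier analysis on the torus -/

noncomputable def zt (N : ℕ) : ℂ := Complex.exp (2 * Real.pi * Complex.I / N)

noncomputable def tpt {n : ℕ} (N : ℕ) (ω : Fin n → Fin N) : Fin n → ℂ :=
  fun i => zt N ^ (ω i : ℕ)

lemma zt_norm {N : ℕ} (hN : N ≠ 0) : ‖zt N‖ = 1 :=
  Complex.norm_eq_one_of_pow_eq_one (Complex.isPrimitiveRoot_exp N hN).pow_eq_one hN

lemma tpt_norm {n N : ℕ} (hN : N ≠ 0) (ω : Fin n → Fin N) (i : Fin n) : ‖tpt N ω i‖ = 1 := by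
  simp [tpt, zt_norm hN]

open ComplexConjugate in
lemma orth_one {N a b : ℕ} (hN : N ≠ 0) (ha : a < N) (hb : b < N) :
    ∑ j : Fin N, (zt N ^ (j : ℕ)) ^ a * conj ((zt N ^ (j : ℕ)) ^ b) =
      if a = b then (N : ℂ) else 0 := by
  have hz := Complex.isPrimitiveRoot_exp N hN
  change IsPrimitiveRoot (zt N) N at hz
  have hcz : zt N * conj (zt N) = 1 := by
    rw [RCLike.mul_conj, zt_norm hN]; simp
  have key : ∀ j : Fin N, (zt N ^ (j : ℕ)) ^ a * conj ((zt N ^ (j : ℕ)) ^ b) =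
      (zt N ^ a * conj (zt N) ^ b) ^ (j : ℕ) := by
    intro j
    simp only [map_pow]
    ring
  simp_rw [key]
  rw [Fin.sum_univ_eq_sum_range (fun j => (zt N ^ a * conj (zt N) ^ b) ^ j)]
  split_ifs with h
  · subst h
    rw [← mul_pow, hcz]; simp
  · have hq : zt N ^ a * conj (zt N) ^ b ≠ 1 := by
      intro h1
      apply h
      apply hz.pow_inj ha hb
      have : zt N ^ b = zt N ^ a * (zt N * conj (zt N)) ^ b := by
        rw [mul_pow]
        linear_combination (-zt N ^ b) * h1
      rw [this, hcz]; simp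
    rw [geom_sum_eq hq]
    have : (zt N ^ a * conj (zt N) ^ b) ^ N = 1 := by
      have h1 : zt N ^ N = 1 := hz.pow_eq_one
      have : conj (zt N) ^ N = 1 := by rw [← map_pow, h1, map_one]
      rw [mul_pow, ← pow_mul, ← pow_mul, mul_comm a, mul_comm b, pow_mul, pow_mul, h1, this]
      simp
    rw [this]; simp

open ComplexConjugate in
lemma orth {n N : ℕ} (hN : N ≠ 0) {α β : Fin n → ℕ} (ha : ∀ i, α i < N) (hb : ∀ i, β i < N) :
    ∑ ω : Fin n → Fin N, mono (tpt N ω) α * conj (mono (tpt N ω) β) =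
      if α = β then (N : ℂ) ^ n else 0 := by
  have key : ∀ ω : Fin n → Fin N, mono (tpt N ω) α * conj (mono (tpt N ω) β) =
      ∏ i, ((zt N ^ (ω i : ℕ)) ^ α i * conj ((zt N ^ (ω i : ℕ)) ^ β i)) := by
    intro ω
    simp [mono, tpt, Finset.prod_mul_distrib]
  simp_rw [key]
  have := Finset.prod_univ_sum (fun _ : Fin n => (univ : Finset (Fin N)))
    (fun i j => (zt N ^ (j : ℕ)) ^ α i * conj ((zt N ^ (j : ℕ)) ^ β i))
  rw [Fintype.piFinset_univ] at this
  rw [← this]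
  simp_rw [fun i => orth_one hN (ha i) (hb i)]
  split_ifs with h
  · subst h; simp
  · obtain ⟨i, hi⟩ := Function.ne_iff.mp h
    exact Finset.prod_eq_zero (Finset.mem_univ i) (by simp [hi])

open ComplexConjugate in
lemma parseval {n N : ℕ} (hN : N ≠ 0) (S : Finset (Fin n → ℕ)) (hS : ∀ α ∈ S, ∀ i, α i < N)
    (c : (Fin n → ℕ) → ℂ) :
    ∑ ω : Fin n → Fin N, ‖∑ α ∈ S, c α * mono (tpt N ω) α‖ ^ 2 =
      (N : ℝ) ^ n * ∑ α ∈ S, ‖c α‖ ^ 2 := by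
  have : ((∑ ω : Fin n → Fin N, ‖∑ α ∈ S, c α * mono (tpt N ω) α‖ ^ 2 : ℝ) : ℂ) =
      (((N : ℝ) ^ n * ∑ α ∈ S, ‖c α‖ ^ 2 : ℝ) : ℂ) := by
    push_cast
    simp_rw [← RCLike.ofReal_eq_complex_ofReal, ← RCLike.mul_conj, map_sum, map_mul,
      Finset.sum_mul_sum]
    rw [Finset.sum_comm, Finset.mul_sum]
    apply Finset.sum_congr rfl
    intro α hα
    rw [Finset.sum_comm]
    have : ∀ β ∈ S, ∑ ω : Fin n → Fin N,
        c α * mono (tpt N ω) α * (conj (c β) * conj (mono (tpt N ω) β)) =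
        if α = β then (N : ℂ) ^ n * (c α * conj (c β)) else 0 := by
      intro β hβ
      have h := orth hN (hS α hα) (hS β hβ)
      calc _ = (c α * conj (c β)) * ∑ ω : Fin n → Fin N,
            mono (tpt N ω) α * conj (mono (tpt N ω) β) := by
              rw [Finset.mul_sum]; apply Finset.sum_congr rfl; intros; ring
        _ = _ := by rw [h]; split_ifs <;> ring
    rw [Finset.sum_congr rfl this]
    simp [hα]
  exact_mod_cast this

lemma idx_lt {n m N : ℕ} (h : m < N) : ∀ α ∈ idx n m, ∀ i, α i < N := by
  intro α hα i
  rw [mem_idx] at hα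
  have := Finset.single_le_sum (f := α) (fun _ _ => Nat.zero_le _) (Finset.mem_univ i)
  omega

/-- Cauchy estimate for coefficients. -/
lemma coef_bound {n m : ℕ} (c : (Fin n → ℕ) → ℂ) (x : Fin n → ℂ) {B : ℝ} (hB : 0 ≤ B)
    (h : ∀ t : Fin n → ℂ, (∀ i, ‖t i‖ = 1) →
      ‖∑ α ∈ idx n m, c α * mono (fun i => x i * t i) α‖ ≤ B) {β : Fin n → ℕ}
    (hβ : β ∈ idx n m) : ‖c β‖ * ‖mono x β‖ ≤ B := by
  have hP := parseval (N := m+1) (by omega) (idx n m) (idx_lt (by omega)) (fun α => c α * mono x α)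
  have h1 : ∑ ω : Fin n → Fin (m+1), ‖∑ α ∈ idx n m, c α * mono x α * mono (tpt (m+1) ω) α‖ ^ 2
      ≤ ((m + 1 : ℕ) : ℝ) ^ n * B ^ 2 := by
    calc _ ≤ ∑ ω : Fin n → Fin (m+1), B ^ 2 := by
          apply Finset.sum_le_sum
          intro ω _
          have := h (tpt (m+1) ω) (tpt_norm (by omega) ω)
          simp_rw [mono_mul, ← mul_assoc] at this
          gcongr
      _ = _ := by simp
  rw [hP] at h1
  have h2 := le_of_mul_le_mul_left h1 (by positivity)
  have h3 := (Finset.single_le_sum (f := fun α => ‖c α * mono x α‖ ^ 2)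
    (fun _ _ => by positivity) hβ).trans h2
  rw [← norm_mul]
  exact le_of_abs_le (abs_le_of_sq_le_sq h3 hB)

/-- Bound for the `L⁴` norm by the `L²` norm. -/
lemma L4_bound {n m N : ℕ} (hN : 2 * m < N) (c : (Fin n → ℕ) → ℂ) :
    ∑ ω : Fin n → Fin N, ‖∑ α ∈ idx n m, c α * mono (tpt N ω) α‖ ^ 4 ≤
      (N : ℝ) ^ n * (4 ^ m * (∑ α ∈ idx n m, ‖c α‖ ^ 2) ^ 2) := by
  classical
  let F : (Fin n → ℕ) → Finset ((Fin n → ℕ) × (Fin n → ℕ)) := fun γ =>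
    (idx n m ×ˢ idx n m).filter (fun q => q.1 + q.2 = γ)
  let b : (Fin n → ℕ) → ℂ := fun γ => ∑ q ∈ F γ, c q.1 * c q.2
  have maps : ∀ q ∈ idx n m ×ˢ idx n m, q.1 + q.2 ∈ idx n (2 * m) := by
    intro q hq
    rw [Finset.mem_product, mem_idx, mem_idx] at hq
    rw [mem_idx]
    simp [Finset.sum_add_distrib, hq.1, hq.2]; omega
  have sq : ∀ z : Fin n → ℂ, (∑ α ∈ idx n m, c α * mono z α) ^ 2 =
      ∑ γ ∈ idx n (2*m), b γ * mono z γ := by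
    intro z
    rw [_root_.sq, Finset.sum_mul_sum, ← Finset.sum_product', ← Finset.sum_fiberwise_of_maps_to maps]
    apply Finset.sum_congr rfl
    intro γ _
    simp only [b, F, Finset.sum_mul]
    apply Finset.sum_congr rfl
    intro q hq
    rw [← (Finset.mem_filter.mp hq).2]
    have := mono_add z q.1 q.2
    rw [show q.1 + q.2 = fun i => q.1 i + q.2 i from rfl, this]
    ring
  have card : ∀ γ ∈ idx n (2*m), ((F γ).card : ℝ) ≤ 4 ^ m := by
    intro γ hγ
    have h1 : (F γ).card ≤ (Finset.Iic γ).card := by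
      apply Finset.card_le_card_of_injOn (fun q => q.1)
      · intro q hq
        have := (Finset.mem_filter.mp hq).2
        simp only [Finset.coe_Iic, Set.mem_Iic]
        rw [← this]
        exact le_self_add
      · intro q hq q' hq' h
        have h1 := (Finset.mem_filter.mp hq).2
        have h2 := (Finset.mem_filter.mp hq').2
        simp only at h
        rw [← h2, h] at h1
        exact Prod.ext h (add_left_cancel h1)
    have h2 : (Finset.Iic γ).card ≤ 4 ^ m := by
      rw [Pi.card_Iic]
      calc ∏ i, (Finset.Iic (γ i)).card ≤ ∏ i, 2 ^ γ i := by
            apply Finset.prod_le_prod' 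
            intro i _
            rw [Nat.card_Iic]
            exact Nat.lt_two_pow_self
        _ = 4 ^ m := by
            rw [Finset.prod_pow_eq_pow_sum, mem_idx.mp hγ, pow_mul]; norm_num
    exact_mod_cast h1.trans h2
  have e1 : ∀ ω : Fin n → Fin N, ‖∑ α ∈ idx n m, c α * mono (tpt N ω) α‖ ^ 4 =
      ‖∑ γ ∈ idx n (2*m), b γ * mono (tpt N ω) γ‖ ^ 2 := by
    intro ω
    rw [← sq, norm_pow]; ring
  simp_rw [e1]
  rw [parseval (by omega) _ (idx_lt hN)]
  gcongr
  calc ∑ γ ∈ idx n (2*m), ‖b γ‖ ^ 2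
      ≤ ∑ γ ∈ idx n (2*m), 4 ^ m * ∑ q ∈ F γ, ‖c q.1‖ ^ 2 * ‖c q.2‖ ^ 2 := by
        apply Finset.sum_le_sum
        intro γ hγ
        calc ‖b γ‖ ^ 2 ≤ (∑ q ∈ F γ, ‖c q.1 * c q.2‖) ^ 2 := by
              gcongr; exact norm_sum_le _ _
          _ ≤ (F γ).card * ∑ q ∈ F γ, ‖c q.1 * c q.2‖ ^ 2 := sq_sum_le_card_mul_sum_sq
          _ ≤ 4 ^ m * ∑ q ∈ F γ, ‖c q.1 * c q.2‖ ^ 2 := by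
              gcongr; exact card γ hγ
          _ = _ := by simp_rw [norm_mul, mul_pow]
    _ = 4 ^ m * (∑ α ∈ idx n m, ‖c α‖ ^ 2) ^ 2 := by
        rw [← Finset.mul_sum, Finset.sum_fiberwise_of_maps_to maps, _root_.sq, Finset.sum_mul_sum,
          Finset.sum_product]

/-- Hypercontractivity: `L²` norm bounded by the `L¹` norm. -/
lemma L2_bound {n m N : ℕ} (hN : 2 * m < N) (c : (Fin n → ℕ) → ℂ) :
    (N : ℝ) ^ n * √(∑ α ∈ idx n m, ‖c α‖ ^ 2) ≤
      2 ^ m * ∑ ω : Fin n → Fin N, ‖∑ α ∈ idx n m, c α * mono (tpt N ω) α‖ := by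
  set g : (Fin n → Fin N) → ℝ := fun ω => ‖∑ α ∈ idx n m, c α * mono (tpt N ω) α‖ with hg
  set T : ℝ := (N : ℝ) ^ n
  have hT : 0 < T := by have : 0 < N := by omega
                        positivity
  set s := √(∑ α ∈ idx n m, ‖c α‖ ^ 2) with hs
  have hs0 : 0 ≤ s := Real.sqrt_nonneg _
  have hs2 : s ^ 2 = ∑ α ∈ idx n m, ‖c α‖ ^ 2 := Real.sq_sqrt (by positivity)
  have h4 : ∑ ω, g ω ^ 4 ≤ T * (4 ^ m * (s ^ 2) ^ 2) := by rw [hs2]; exact L4_bound hN c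
  have h2 : ∑ ω, g ω ^ 2 = T * s ^ 2 := by
    rw [hs2]; exact parseval (by omega) _ (idx_lt (by omega)) c
  have hg0 : ∀ ω, 0 ≤ g ω := fun ω => norm_nonneg _
  have c1 : (∑ ω, g ω ^ 2) ^ 2 ≤ (∑ ω, g ω) * ∑ ω, g ω ^ 3 :=
    Finset.sum_sq_le_sum_mul_sum_of_sq_le_mul _ (fun ω _ => hg0 ω) (fun ω _ => pow_nonneg (hg0 ω) 3)
      (fun ω _ => by ring_nf; rfl)
  have c2 : (∑ ω, g ω ^ 3) ^ 2 ≤ (∑ ω, g ω ^ 2) * ∑ ω, g ω ^ 4 :=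
    Finset.sum_sq_le_sum_mul_sum_of_sq_le_mul _ (fun ω _ => pow_nonneg (hg0 ω) 2)
      (fun ω _ => pow_nonneg (hg0 ω) 4) (fun ω _ => by ring_nf; rfl)
  set S1 := ∑ ω, g ω
  have hS1 : 0 ≤ S1 := Finset.sum_nonneg fun ω _ => hg0 ω
  set S3 := ∑ ω, g ω ^ 3
  have hS3 : 0 ≤ S3 := Finset.sum_nonneg fun ω _ => pow_nonneg (hg0 ω) 3
  rw [h2] at c1 c2
  rcases hs0.eq_or_lt with h0 | h0
  · rw [← h0]; simp; positivity
  have c3 : S3 ≤ T * 2 ^ m * s ^ 3 := by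
    refine le_of_abs_le (abs_le_of_sq_le_sq ?_ (by positivity))
    calc S3 ^ 2 ≤ T * s ^ 2 * (T * (4 ^ m * (s ^ 2) ^ 2)) := c2.trans (by gcongr)
      _ = (T * 2 ^ m * s ^ 3) ^ 2 := by
        rw [show (4:ℝ) ^ m = (2 ^ m) ^ 2 by rw [← pow_mul, mul_comm, pow_mul]; norm_num]; ring
  have c4 : (T * s ^ 2) ^ 2 ≤ S1 * (T * 2 ^ m * s ^ 3) := c1.trans (by gcongr)
  have c5 : (T * s ^ 3) * (T * s) ≤ (T * s ^ 3) * (2 ^ m * S1) := by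
    calc _ = (T * s ^ 2) ^ 2 := by ring
      _ ≤ _ := c4
      _ = _ := by ring
  exact le_of_mul_le_mul_left c5 (by positivity)

/-! ### Homogeneous estimates -/

lemma idx_card (n m : ℕ) : ((idx n m).card : ℝ) ≤ ((n : ℝ) + m) ^ m / m.factorial := by
  have h : (idx n m).card = n.multichoose m := by
    rw [idx, ← Finset.map_sym_eq_piAntidiag, Finset.card_map, Finset.sym_univ, Finset.card_univ,
      Sym.card_sym_eq_multichoose, Fintype.card_fin]
  rw [h, Nat.multichoose_eq]
  refine (Nat.choose_le_pow_div m (n + m - 1)).trans ?_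
  gcongr
  have : n + m - 1 ≤ n + m := by omega
  exact_mod_cast this

lemma exp_three (m : ℕ) : (m : ℝ) ^ m / m.factorial ≤ 3 ^ m := by
  refine (Real.pow_div_factorial_le_exp _ (Nat.cast_nonneg m) m).trans ?_
  rw [← mul_one (m : ℝ), Real.exp_nat_mul]
  gcongr
  exact Real.exp_one_lt_d9.le.trans (by norm_num)

lemma numeric {n : ℕ} (hn : 2 ≤ n) (m : ℕ) :
    (Real.log n / n) ^ (m + 1) * ((idx n m).card : ℝ) ≤ 8 ^ (m + 1) := by
  have hn0 : (0 : ℝ) < n := by positivity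
  have hL0 : 0 ≤ Real.log n := Real.log_natCast_nonneg n
  set L := Real.log n with hL
  have hLn : L / n ≤ 1 := by
    rw [div_le_one hn0]
    linarith [Real.log_le_sub_one_of_pos hn0]
  set s := Real.exp (L / 2) with hs
  have hs0 : 0 < s := Real.exp_pos _
  have hns : (n : ℝ) = s * s := by
    rw [hs, ← Real.exp_add, hL, add_halves, Real.exp_log hn0]
  have hLs : L ≤ 2 * s := by
    have := Real.add_one_le_exp (L / 2)
    linarith
  have h1 : ((n : ℝ) + m) ^ m ≤ 2 ^ m * ((n : ℝ) ^ m + (m : ℝ) ^ m) := by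
    rcases le_total (n : ℝ) m with h | h
    · calc ((n : ℝ) + m) ^ m ≤ (2 * m) ^ m := by gcongr; linarith
        _ = 2 ^ m * (m : ℝ) ^ m := by rw [mul_pow]
        _ ≤ _ := by gcongr; linarith [pow_nonneg hn0.le m]
    · calc ((n : ℝ) + m) ^ m ≤ (2 * n) ^ m := by gcongr; linarith
        _ = 2 ^ m * (n : ℝ) ^ m := by rw [mul_pow]
        _ ≤ _ := by gcongr; linarith [pow_nonneg (Nat.cast_nonneg (α := ℝ) m) m]
  have h2 : ((idx n m).card : ℝ) ≤ 2 ^ m * (n : ℝ) ^ m / m.factorial + 2 ^ m * 3 ^ m := by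
    refine (idx_card n m).trans ?_
    calc _ ≤ 2 ^ m * ((n : ℝ) ^ m + (m : ℝ) ^ m) / m.factorial := by gcongr
      _ = 2 ^ m * (n : ℝ) ^ m / m.factorial + 2 ^ m * ((m : ℝ) ^ m / m.factorial) := by ring
      _ ≤ _ := by gcongr; exact exp_three m
  have h3 : (L / n) ^ (m+1) * (2 ^ m * (n : ℝ) ^ m / m.factorial) ≤ 2 * 4 ^ m := by
    calc _ = L / n * (4 ^ m * ((L / 2) ^ m / m.factorial)) := by
          rw [pow_succ, div_pow, div_pow, show (4:ℝ) ^ m = 2 ^ m * 2 ^ m by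
            rw [← mul_pow]; norm_num]
          field_simp
      _ ≤ L / n * (4 ^ m * s) := by
          gcongr
          exact Real.pow_div_factorial_le_exp _ (by positivity) m
      _ = (L / s) * 4 ^ m := by rw [hns]; field_simp
      _ ≤ _ := by
          gcongr
          rw [div_le_iff₀ hs0]; exact hLs
  have h4 : (L / n) ^ (m+1) * (2 ^ m * 3 ^ m) ≤ 6 ^ m := by
    calc _ ≤ 1 * ((2:ℝ) ^ m * 3 ^ m) := by
          gcongr
          exact pow_le_one₀ (by positivity) hLn
      _ = 6 ^ m := by rw [one_mul, ← mul_pow]; norm_num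
  calc _ ≤ (L / n) ^ (m+1) * (2 ^ m * (n : ℝ) ^ m / m.factorial + 2 ^ m * 3 ^ m) := by gcongr
    _ ≤ 2 * 4 ^ m + 6 ^ m := by rw [mul_add]; linarith
    _ ≤ 2 * 8 ^ m + 8 ^ m := by gcongr <;> norm_num
    _ ≤ 8 ^ (m+1) := by rw [pow_succ]; linarith [pow_pos (show (0:ℝ) < 8 by norm_num) m]

lemma norm_mono_shift {n : ℕ} (u : Fin n → ℂ) (β : Fin n → ℕ) (k : Fin n) :
    mono u (β + Pi.single k 1) = mono u β * u k := by
  have := mono_add u β (Pi.single k 1)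
  rw [show β + Pi.single k 1 = fun i => β i + (Pi.single k 1 : Fin n → ℕ) i from rfl, this]
  congr 1
  unfold mono
  rw [Finset.prod_eq_single k]
  · simp
  · intro b _ hb; simp [hb]
  · simp

lemma sum_le_shift {n m : ℕ} (c : (Fin n → ℕ) → ℂ) (u : Fin n → ℂ) :
    ∑ α ∈ idx n (m+1), ‖c α‖ * ‖mono u α‖ ≤
      ∑ k, ∑ β ∈ idx n m, ‖dcoef c k β‖ * ‖u k‖ * ‖mono u β‖ := by
  calc _ ≤ ∑ α ∈ idx n (m+1), ∑ k, (α k : ℝ) * (‖c α‖ * ‖mono u α‖) := by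
        apply Finset.sum_le_sum
        intro α hα
        rw [← Finset.sum_mul, ← Nat.cast_sum, mem_idx.mp hα]
        push_cast
        have : 0 ≤ ‖c α‖ * ‖mono u α‖ := by positivity
        nlinarith [mul_nonneg (Nat.cast_nonneg (α := ℝ) m) this]
    _ = ∑ k, ∑ α ∈ idx n (m+1), (α k : ℝ) * (‖c α‖ * ‖mono u α‖) := Finset.sum_comm
    _ = _ := by
        apply Finset.sum_congr rfl
        intro k _
        rw [sum_shift k]
        · apply Finset.sum_congr rfl
          intro β _
          rw [norm_mono_shift, dcoef, norm_mul, norm_mul]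
          have : ‖(β k : ℂ) + 1‖ = (β k : ℝ) + 1 := by
            have := Complex.norm_natCast (β k + 1)
            push_cast at this
            exact this
          rw [this]
          simp
          ring
        · intro α h; simp [h]

lemma phase (d : ℂ) : ∃ w : ℂ, ‖w‖ ≤ 1 ∧ w * d = ‖d‖ := by
  by_cases h : d = 0
  · exact ⟨0, by simp, by simp [h]⟩
  · refine ⟨(starRingEnd ℂ) d / ‖d‖, by simp [h], ?_⟩
    have : (‖d‖ : ℂ) ≠ 0 := by simpa using h
    rw [div_mul_eq_mul_div, mul_comm, Complex.mul_conj, div_eq_iff this, Complex.normSq_eq_norm_sq]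
    push_cast; ring

lemma multinomial_bound {n m : ℕ} {β : Fin n → ℕ} (hβ : β ∈ idx n m) :
    1 ≤ (∏ i, ((β i : ℝ) / m) ^ β i) * (3 ^ m * Nat.multinomial univ β) := by
  have hs := mem_idx.mp hβ
  have h1 := Nat.multinomial_spec (univ : Finset (Fin n)) β
  rw [hs] at h1
  have h1' : (∏ i, ((β i).factorial : ℝ)) * Nat.multinomial univ β = m.factorial := by
    exact_mod_cast h1
  have h2 : (∏ i, ((β i).factorial : ℝ)) ≤ ∏ i, (β i : ℝ) ^ β i := by
    apply Finset.prod_le_prod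
    · intros; positivity
    · intro i _
      exact_mod_cast Nat.factorial_le_pow (β i)
  have h3 := exp_three m
  rw [div_le_iff₀ (by positivity)] at h3
  simp_rw [div_pow]
  rw [Finset.prod_div_distrib, Finset.prod_pow_eq_pow_sum, hs]
  have hm : (0 : ℝ) < (m : ℝ) ^ m := by
    rcases Nat.eq_zero_or_pos m with h | h
    · subst h; simp
    · positivity
  rw [div_mul_eq_mul_div, le_div_iff₀ hm, one_mul]
  calc (m : ℝ) ^ m ≤ 3 ^ m * ((∏ i, ((β i).factorial : ℝ)) * Nat.multinomial univ β) := by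
        rw [h1']; exact h3
    _ ≤ 3 ^ m * ((∏ i, (β i : ℝ) ^ β i) * Nat.multinomial univ β) := by gcongr
    _ = _ := by ring

lemma hom_low {n m : ℕ} {p : ℝ≥0∞} (hp : 1 ≤ p) (hp' : p ≠ ∞) (c : (Fin n → ℕ) → ℂ) {A ρ : ℝ}
    (hρ : 0 < ρ)
    (hA : ∀ z s, 0 < s → pNorm p z ≤ s → ‖∑ α ∈ idx n (m+1), c α * mono z α‖ ≤ A * s ^ (m+1))
    (u : Fin n → ℂ) (hu : pNorm p u ≤ ρ) :
    ∑ α ∈ idx n (m+1), ‖c α‖ * ‖mono u α‖ ≤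
      A * 2 ^ (m+1) * 3 ^ m * ρ ^ (m+1) * ((idx n m).card : ℝ) ^ (1 - 1 / p.toReal) := by
  set q := p.toReal with hq
  have hq1 : 1 ≤ q := by
    have := ENNReal.toReal_mono hp' hp
    simpa using this
  have hq0 : 0 < q := by linarith
  have hA0 : 0 ≤ A := by
    have := hA 0 1 one_pos (by
      have := pNorm_smul hp (0:ℂ) (0 : Fin n → ℂ)
      simp only [norm_zero, zero_mul] at this
      change pNorm p (fun i => 0) ≤ 1
      rw [this]; norm_num)
    have h2 := (norm_nonneg _).trans this
    simpa using h2
  set B := A * 2 ^ (m+1) * ρ with hB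
  have hB0 : 0 ≤ B := by positivity
  set e : (Fin n → ℕ) → ℝ := fun β => ∑ k, ‖dcoef c k β‖ * ‖u k‖ with he
  have he0 : ∀ β, 0 ≤ e β := fun β => Finset.sum_nonneg fun _ _ => by positivity
  -- the estimate of a single block
  have block : ∀ β ∈ idx n m, e β ^ q ≤ B ^ q * (3 ^ m * Nat.multinomial univ β) := by
    intro β hβ
    choose w hw1 hw2 using fun k => phase (dcoef c k β)
    set x : Fin n → ℂ := fun i => ((((β i : ℝ) / m) ^ (1 / q) : ℝ) : ℂ) with hx
    have hxn : ∀ i, ‖x i‖ = ((β i : ℝ) / m) ^ (1 / q) := by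
      intro i
      rw [hx, Complex.norm_real, Real.norm_of_nonneg (by positivity)]
    have h1 : ‖∑ k, (‖u k‖ * w k) * dcoef c k β‖ * ‖mono x β‖ ≤ B := by
      apply coef_bound (fun β => ∑ k, (‖u k‖ * w k) * dcoef c k β) x hB0 _ hβ
      intro t ht
      have := deriv_bound hp c hρ hA (fun i => x i * t i) (fun k => ‖u k‖ * w k) (by
          unfold pNorm
          rw [if_neg hp']
          apply Real.rpow_le_one (by positivity) _ (by positivity)
          simp_rw [norm_mul, ht, mul_one, hxn, ← hq]
          have : ∀ i, (((β i : ℝ) / m) ^ (1 / q)) ^ q = (β i : ℝ) / m := by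
            intro i
            rw [← Real.rpow_mul (by positivity), one_div_mul_cancel hq0.ne', Real.rpow_one]
          simp_rw [this]
          rw [← Finset.sum_div, ← Nat.cast_sum, mem_idx.mp hβ]
          exact div_self_le_one _) (by
          refine (pNorm_mono hp ?_).trans hu
          intro k
          rw [norm_mul]
          simpa using mul_le_mul_of_nonneg_left (hw1 k) (norm_nonneg (u k)))
      rw [← hB] at this
      convert this using 2
      simp_rw [Finset.mul_sum, Finset.sum_mul]
      rw [Finset.sum_comm]
      apply Finset.sum_congr rfl; intro k _
      apply Finset.sum_congr rfl; intro β _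
      ring
    have h2 : ‖∑ k, (‖u k‖ * w k) * dcoef c k β‖ = e β := by
      have : ∑ k, (‖u k‖ * w k) * dcoef c k β = (e β : ℂ) := by
        rw [he]; push_cast
        apply Finset.sum_congr rfl; intro k _
        rw [mul_assoc, hw2]; ring
      rw [this, Complex.norm_real, Real.norm_of_nonneg (he0 β)]
    rw [h2] at h1
    have h3 : ‖mono x β‖ ^ q = ∏ i, ((β i : ℝ) / m) ^ β i := by
      unfold mono
      rw [norm_prod, ← Real.finsetProd_rpow _ _ (fun _ _ => norm_nonneg _)]
      apply Finset.prod_congr rfl; intro i _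
      rw [norm_pow, hxn, ← Real.rpow_natCast, ← Real.rpow_natCast, ← Real.rpow_mul (by positivity),
        ← Real.rpow_mul (by positivity)]
      congr 1
      field_simp
    have h4 := Real.rpow_le_rpow (by have := he0 β; positivity) h1 hq0.le
    rw [Real.mul_rpow (he0 β) (norm_nonneg _), h3] at h4
    have h5 := multinomial_bound hβ
    calc e β ^ q ≤ e β ^ q * ((∏ i, ((β i : ℝ) / m) ^ β i) * (3 ^ m * Nat.multinomial univ β)) :=
          le_mul_of_one_le_right (Real.rpow_nonneg (he0 β) _) h5
      _ = (e β ^ q * (∏ i, ((β i : ℝ) / m) ^ β i)) * (3 ^ m * Nat.multinomial univ β) := by ring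
      _ ≤ _ := by gcongr
  have hNq : ∑ i, ‖u i‖ ^ q ≤ ρ ^ q := by
    have h := hu
    unfold pNorm at h
    rw [if_neg hp', ← hq] at h
    have := Real.rpow_le_rpow (by positivity) h hq0.le
    rwa [← Real.rpow_mul (by positivity), one_div_mul_cancel hq0.ne', Real.rpow_one] at this
  set K : ℝ := ((idx n m).card : ℝ) with hK
  have main : (∑ β ∈ idx n m, e β * ‖mono u β‖) ^ q ≤
      (B * 3 ^ m * ρ ^ m * K ^ (1 - 1 / q)) ^ q := by
    calc _ ≤ K ^ (q - 1) * ∑ β ∈ idx n m, (e β * ‖mono u β‖) ^ q :=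
          Real.rpow_sum_le_const_mul_sum_rpow_of_nonneg _ hq1
            (fun β _ => mul_nonneg (he0 β) (norm_nonneg _))
      _ ≤ K ^ (q - 1) * ∑ β ∈ idx n m, B ^ q * 3 ^ m *
            (Nat.multinomial univ β * ∏ i, (‖u i‖ ^ q) ^ β i) := by
          gcongr with β hβ
          rw [Real.mul_rpow (he0 β) (norm_nonneg _)]
          have : ‖mono u β‖ ^ q = ∏ i, (‖u i‖ ^ q) ^ β i := by
            unfold mono
            rw [norm_prod, ← Real.finsetProd_rpow _ _ (fun _ _ => norm_nonneg _)]
            apply Finset.prod_congr rfl; intro i _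
            rw [norm_pow, ← Real.rpow_natCast, ← Real.rpow_natCast,
              ← Real.rpow_mul (by positivity), ← Real.rpow_mul (by positivity), mul_comm]
          rw [this]
          calc _ ≤ B ^ q * (3 ^ m * Nat.multinomial univ β) * ∏ i, (‖u i‖ ^ q) ^ β i := by
                gcongr
                exact block β hβ
            _ = _ := by ring
      _ = K ^ (q - 1) * (B ^ q * 3 ^ m * (∑ i, ‖u i‖ ^ q) ^ m) := by
          rw [← Finset.mul_sum, Finset.sum_pow_eq_sum_piAntidiag, idx]
      _ ≤ K ^ (q - 1) * (B ^ q * (3 ^ m) ^ q * (ρ ^ q) ^ m) := by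
          gcongr
          apply Real.self_le_rpow_of_one_le _ hq1
          exact one_le_pow₀ (by norm_num)
      _ = _ := by
          rw [Real.mul_rpow (x := B * 3 ^ m * ρ ^ m) (by positivity) (by positivity),
            Real.mul_rpow (x := B * 3 ^ m) (by positivity) (by positivity),
            Real.mul_rpow (x := B) (by positivity) (by positivity),
            ← Real.rpow_mul (x := K) (by positivity),
            show (1 - 1 / q) * q = q - 1 by field_simp]
          have : (ρ ^ q) ^ m = (ρ ^ m) ^ q := by
            rw [← Real.rpow_natCast, ← Real.rpow_natCast, ← Real.rpow_mul (by positivity),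
              ← Real.rpow_mul (by positivity), mul_comm]
          rw [this]
          ring
  have main2 := (Real.rpow_le_rpow_iff (Finset.sum_nonneg fun β _ =>
    mul_nonneg (he0 β) (norm_nonneg _)) (by positivity) hq0).mp main
  calc _ ≤ _ := sum_le_shift c u
    _ = ∑ β ∈ idx n m, e β * ‖mono u β‖ := by
        rw [Finset.sum_comm]
        simp_rw [he, Finset.sum_mul]
    _ ≤ _ := main2
    _ = _ := by rw [hB]; ring

lemma pNorm_top_le {n : ℕ} {z : Fin n → ℂ} {s : ℝ} (hs : 0 ≤ s) : pNorm ∞ z ≤ s ↔ ∀ i, ‖z i‖ ≤ s := by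
  unfold pNorm
  rw [if_pos rfl]
  constructor
  · intro h i
    exact (le_ciSup (Set.finite_range _).bddAbove i).trans h
  · intro h
    exact Real.iSup_le h hs

lemma hom_high {n m : ℕ} (c : (Fin n → ℕ) → ℂ) {A : ℝ}
    (hA : ∀ z s, 0 < s → pNorm ∞ z ≤ s → ‖∑ α ∈ idx n (m+1), c α * mono z α‖ ≤ A * s ^ (m+1)) :
    ∑ α ∈ idx n (m+1), ‖c α‖ ≤ A * 4 ^ (m+1) * √((idx n m).card : ℝ) := by
  have hA0 : 0 ≤ A := by
    have := hA 0 1 one_pos ((pNorm_top_le (by norm_num)).2 (by simp))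
    have h2 := (norm_nonneg _).trans this
    simpa using h2
  set N := 2 * m + 1 with hN
  have hT : (0:ℝ) < (N : ℝ) ^ n := by positivity
  set s : Fin n → ℝ := fun k => √(∑ β ∈ idx n m, ‖dcoef c k β‖ ^ 2) with hs
  have h1 : ∀ ω : Fin n → Fin N, ∑ k, ‖∑ β ∈ idx n m, dcoef c k β * mono (tpt N ω) β‖ ≤
      A * 2 ^ (m+1) := by
    intro ω
    choose w hw1 hw2 using fun k => phase (∑ β ∈ idx n m, dcoef c k β * mono (tpt N ω) β)
    have := deriv_bound (p := ∞) (by simp) c one_pos hA (tpt N ω) w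
      ((pNorm_top_le (by norm_num)).2 (fun i => (tpt_norm (by omega) ω i).le))
      ((pNorm_top_le (by norm_num)).2 hw1)
    simp_rw [hw2] at this
    rw [← Complex.ofReal_sum, Complex.norm_real, mul_one] at this
    exact (le_abs_self _).trans this
  have h2 : ∑ k, s k ≤ A * 2 ^ (m+1) * 2 ^ m := by
    have : (N : ℝ) ^ n * ∑ k, s k ≤ (N : ℝ) ^ n * (A * 2 ^ (m+1) * 2 ^ m) := by
      calc (N : ℝ) ^ n * ∑ k, s k = ∑ k, (N : ℝ) ^ n * s k := Finset.mul_sum _ _ _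
        _ ≤ ∑ k, 2 ^ m * ∑ ω : Fin n → Fin N, ‖∑ β ∈ idx n m, dcoef c k β * mono (tpt N ω) β‖ :=
            Finset.sum_le_sum fun k _ => L2_bound (by omega) (dcoef c k)
        _ = 2 ^ m * ∑ ω : Fin n → Fin N, ∑ k, ‖∑ β ∈ idx n m, dcoef c k β * mono (tpt N ω) β‖ := by
            rw [← Finset.mul_sum, Finset.sum_comm]
        _ ≤ 2 ^ m * ∑ ω : Fin n → Fin N, A * 2 ^ (m+1) := by
            gcongr with ω; exact h1 ω
        _ = _ := by simp; ring
    exact le_of_mul_le_mul_left this hT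
  have h3 : ∀ k, ∑ β ∈ idx n m, ‖dcoef c k β‖ ≤ √((idx n m).card : ℝ) * s k := by
    intro k
    rw [hs, ← Real.sqrt_mul (by positivity)]
    apply Real.le_sqrt_of_sq_le
    exact sq_sum_le_card_mul_sum_sq
  have h4 := sum_le_shift (m := m) c (fun _ => 1)
  have h5 : ∀ α : Fin n → ℕ, mono (fun _ => 1) α = 1 := by simp [mono]
  simp_rw [h5, norm_one, mul_one] at h4
  calc _ ≤ _ := h4
    _ ≤ ∑ k, √((idx n m).card : ℝ) * s k := Finset.sum_le_sum fun k _ => h3 k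
    _ = √((idx n m).card : ℝ) * ∑ k, s k := by rw [Finset.mul_sum]
    _ ≤ √((idx n m).card : ℝ) * (A * 2 ^ (m+1) * 2 ^ (m+1)) := by
        gcongr
        refine h2.trans ?_
        gcongr <;> norm_num
    _ = _ := by
        rw [show (4:ℝ) = 2 * 2 by norm_num, mul_pow]; ring

/-! ### Wiener-type estimate for homogeneous parts -/

lemma phase_one (d : ℂ) : ∃ w : ℂ, ‖w‖ = 1 ∧ w * d = ‖d‖ := by
  by_cases h : d = 0
  · exact ⟨1, by simp, by simp [h]⟩
  · refine ⟨(starRingEnd ℂ) d / ‖d‖, by simp [h], ?_⟩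
    have : (‖d‖ : ℂ) ≠ 0 := by simpa using h
    rw [div_mul_eq_mul_div, mul_comm, Complex.mul_conj, div_eq_iff this, Complex.normSq_eq_norm_sq]
    push_cast; ring

lemma int_exp (k : ℤ) : ∫ θ in (0:ℝ)..(2 * Real.pi), Complex.exp (k * Complex.I * θ) =
    if k = 0 then (2 * Real.pi : ℂ) else 0 := by
  split_ifs with h
  · subst h; simp
  · rw [integral_exp_mul_complex (by simpa using h)]
    have : Complex.exp (k * Complex.I * ((2 * Real.pi : ℝ) : ℂ)) = 1 := by
      rw [Complex.exp_eq_one_iff]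
      exact ⟨k, by push_cast; ring⟩
    rw [this]; simp

/-- the Fejér type kernel. -/
noncomputable def ker (m : ℕ) (ξ : ℂ) (θ : ℝ) : ℝ := 1 + (ξ * Complex.exp (-(m : ℂ) * Complex.I * θ)).re

lemma ker_cont (m : ℕ) (ξ : ℂ) : Continuous (ker m ξ) := by
  unfold ker; fun_prop

lemma ker_nonneg (m : ℕ) {ξ : ℂ} (hξ : ‖ξ‖ = 1) (θ : ℝ) : 0 ≤ ker m ξ θ := by
  unfold ker
  have h : ‖ξ * Complex.exp (-(m : ℂ) * Complex.I * θ)‖ = 1 := by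
    rw [norm_mul, hξ, Complex.norm_exp]; simp
  have := Complex.abs_re_le_norm (ξ * Complex.exp (-(m : ℂ) * Complex.I * θ))
  rw [h] at this
  linarith [(abs_le.mp this).1]

lemma ker_int {m : ℕ} (hm : 1 ≤ m) (ξ : ℂ) (k : ℕ) :
    ∫ θ in (0:ℝ)..(2 * Real.pi), Complex.exp (k * Complex.I * θ) * ker m ξ θ =
      2 * Real.pi * ((if k = 0 then 1 else 0) + (if k = m then ξ / 2 else 0)) := by
  have h : ∀ θ : ℝ, Complex.exp (k * Complex.I * θ) * ker m ξ θ =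
      Complex.exp (((k : ℤ) : ℂ) * Complex.I * θ) +
      ξ / 2 * Complex.exp ((((k : ℤ) - m : ℤ) : ℂ) * Complex.I * θ) +
      (starRingEnd ℂ) ξ / 2 * Complex.exp ((((k : ℤ) + m : ℤ) : ℂ) * Complex.I * θ) := by
    intro θ
    unfold ker
    push_cast
    rw [Complex.re_eq_add_conj, map_mul, ← Complex.exp_conj]
    simp only [map_mul, map_neg, Complex.conj_I, Complex.conj_ofReal, map_natCast]
    rw [show ((k:ℂ) - m) * Complex.I * θ = k * Complex.I * θ + (-(m : ℂ) * Complex.I * θ) by ring,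
      show ((k:ℂ) + m) * Complex.I * θ = k * Complex.I * θ + (-(m : ℂ) * -Complex.I * θ) by ring,
      Complex.exp_add, Complex.exp_add]
    ring
  simp_rw [h]
  rw [intervalIntegral.integral_add, intervalIntegral.integral_add,
    intervalIntegral.integral_const_mul, intervalIntegral.integral_const_mul, int_exp, int_exp,
    int_exp]
  · have h1 : ((k : ℤ) + m : ℤ) ≠ 0 := by omega
    have h2 : ((k : ℤ) - m : ℤ) = 0 ↔ k = m := by omega
    have h3 : (k : ℤ) = 0 ↔ k = 0 := by omega
    simp only [h1, h2, h3, if_false]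
    split_ifs <;> ring
  all_goals
    apply Continuous.intervalIntegrable
    fun_prop

lemma carath {n : ℕ} {p : ℝ≥0∞} (hp : 1 ≤ p) {f : (Fin n → ℂ) → ℂ} {a : (Fin n → ℕ) → ℂ}
    (hf : ∀ z : Fin n → ℂ, pNorm p z < 1 → HasSum (fun α => a α * mono z α) (f z))
    {M : ℝ} (hM : ∀ w, pNorm p w < 1 → ‖f w‖ ≤ M) {m : ℕ} (hm : 1 ≤ m)
    (z : Fin n → ℂ) (hz : pNorm p z < 1) :
    ‖∑ α ∈ idx n m, a α * mono z α‖ ≤ 2 * (M - ‖a 0‖) := by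
  obtain ⟨w0, hw0, hw0'⟩ := phase_one (a 0)
  obtain ⟨w1, hw1, hw1'⟩ := phase_one (∑ α ∈ idx n m, a α * mono z α)
  set P := ∑ α ∈ idx n m, a α * mono z α with hP
  set ξ : ℂ := (starRingEnd ℂ) w0 * w1 with hξ
  have hξ1 : ‖ξ‖ = 1 := by simp [hξ, hw0, hw1]
  have hpi := Real.pi_pos
  let F : (Fin n → ℕ) → ℝ → ℂ := fun α θ =>
    (a α * mono z α) * (Complex.exp (((∑ i, α i : ℕ) : ℂ) * Complex.I * θ) * ker m ξ θ)
  have hker := ker_cont m ξ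
  have hFc : ∀ α, Continuous (F α) := by
    intro α; simp only [F]; fun_prop
  have hFn : ∀ α θ, ‖F α θ‖ = ‖a α * mono z α‖ * ker m ξ θ := by
    intro α θ
    simp only [F]
    rw [norm_mul, norm_mul _ (ker m ξ θ : ℂ), Complex.norm_real,
      Real.norm_of_nonneg (ker_nonneg m hξ1 θ), Complex.norm_exp]
    simp
  have hkI : ∫ θ in (0:ℝ)..(2 * Real.pi), ker m ξ θ = 2 * Real.pi := by
    have := ker_int hm ξ 0
    have h0 : (0:ℕ) ≠ m := by omega
    simp only [h0, if_true, if_false] at this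
    simp at this
    rw [intervalIntegral.integral_ofReal] at this
    exact_mod_cast this
  have hS : Summable fun α => ‖a α * mono z α‖ := (hf z hz).summable.norm
  have hI := MeasureTheory.hasSum_integral_of_summable_integral_norm
    (μ := MeasureTheory.volume.restrict (Set.Ioc 0 (2 * Real.pi))) (F := F)
    (fun α => ((hFc α).intervalIntegrable 0 (2 * Real.pi)).1)
    (by
      have : ∀ α, ∫ θ in Set.Ioc 0 (2 * Real.pi), ‖F α θ‖ = ‖a α * mono z α‖ * (2 * Real.pi) := by
        intro α
        simp_rw [hFn]
        rw [← intervalIntegral.integral_of_le (by positivity),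
          intervalIntegral.integral_const_mul, hkI]
      simp_rw [this]
      exact hS.mul_right _)
  simp_rw [← intervalIntegral.integral_of_le (show (0:ℝ) ≤ 2 * Real.pi by positivity)] at hI
  have hsum : ∀ θ : ℝ, ∑' α, F α θ =
      f (fun i => Complex.exp (Complex.I * θ) * z i) * ker m ξ θ := by
    intro θ
    have h1 : pNorm p (fun i => Complex.exp (Complex.I * θ) * z i) < 1 := by
      rw [pNorm_smul hp, Complex.norm_exp]; simpa using hz
    have := (hf _ h1).mul_right (ker m ξ θ : ℂ)
    rw [← this.tsum_eq]
    congr 1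
    ext α
    simp only [F]
    rw [mono_smul, ← Complex.exp_nat_mul]
    ring_nf
  simp_rw [hsum] at hI
  have hFI : ∀ α, ∫ θ in (0:ℝ)..(2 * Real.pi), F α θ = (a α * mono z α) *
      (2 * Real.pi * ((if (∑ i, α i) = 0 then 1 else 0) + (if (∑ i, α i) = m then ξ / 2 else 0))) := by
    intro α
    simp only [F]
    rw [intervalIntegral.integral_const_mul, ker_int hm]
  simp_rw [hFI] at hI
  have hz0 : ∀ α : Fin n → ℕ, (∑ i, α i) = 0 ↔ α = 0 := by
    intro α
    rw [Finset.sum_eq_zero_iff]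
    simp [funext_iff]
  have hI2 : HasSum (fun α => (a α * mono z α) *
      (2 * Real.pi * ((if (∑ i, α i) = 0 then 1 else 0) + (if (∑ i, α i) = m then ξ / 2 else 0))))
      (2 * Real.pi * (a 0 + ξ / 2 * P)) := by
    have e1 : HasSum (fun α => (a α * mono z α) * (if (∑ i, α i) = 0 then (1:ℂ) else 0)) (a 0) := by
      have := hasSum_single (f := fun α => (a α * mono z α) * (if (∑ i, α i) = 0 then (1:ℂ) else 0)) 0
        (by intro α hα; simp only [hz0, hα, if_false, mul_zero])
      simpa [mono] using this
    have e2 : HasSum (fun α => (a α * mono z α) * (if (∑ i, α i) = m then ξ / 2 else 0))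
        (ξ / 2 * P) := by
      have := hasSum_sum_of_ne_finset_zero (L := SummationFilter.unconditional _)
        (f := fun α => (a α * mono z α) * (if (∑ i, α i) = m then ξ / 2 else 0)) (s := idx n m)
        (by intro α hα; rw [mem_idx] at hα; simp only [hα, if_false, mul_zero])
      convert this using 1
      rw [hP, Finset.mul_sum]
      apply Finset.sum_congr rfl
      intro α hα
      rw [if_pos (mem_idx.mp hα)]; ring
    have := (e1.add e2).mul_left (2 * Real.pi : ℂ)
    refine this.congr_fun ?_
    intro α
    ring
  have heq := hI.unique hI2
  have hb : ‖∫ θ in (0:ℝ)..(2 * Real.pi),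
      f (fun i => Complex.exp (Complex.I * θ) * z i) * ker m ξ θ‖ ≤
      ∫ θ in (0:ℝ)..(2 * Real.pi), M * ker m ξ θ := by
    apply intervalIntegral.norm_integral_le_of_norm_le (by positivity)
    · refine Filter.Eventually.of_forall ?_
      intro θ _
      rw [norm_mul, Complex.norm_real, Real.norm_of_nonneg (ker_nonneg m hξ1 θ)]
      apply mul_le_mul_of_nonneg_right _ (ker_nonneg m hξ1 θ)
      apply hM
      rw [pNorm_smul hp, Complex.norm_exp]; simpa using hz
    · exact (hker.const_mul M |>.intervalIntegrable _ _)
  rw [heq, intervalIntegral.integral_const_mul, hkI, norm_mul] at hb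
  have hn2 : ‖(2 * Real.pi : ℂ)‖ = 2 * Real.pi := by
    rw [norm_mul, Complex.norm_real, Real.norm_of_nonneg hpi.le]; simp
  rw [hn2, mul_comm M] at hb
  have hb2 := le_of_mul_le_mul_left hb (by positivity)
  have hfin : ‖w0 * (a 0 + ξ / 2 * P)‖ = ‖a 0‖ + ‖P‖ / 2 := by
    have hw : w0 * (starRingEnd ℂ) w0 = 1 := by rw [RCLike.mul_conj, hw0]; simp
    have : w0 * (a 0 + ξ / 2 * P) = ((‖a 0‖ + ‖P‖ / 2 : ℝ) : ℂ) := by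
      push_cast
      rw [← hw0', ← hw1', hξ]
      linear_combination (w1 * P / 2) * hw
    rw [this, Complex.norm_real, Real.norm_of_nonneg (by positivity)]
  rw [norm_mul, hw0, one_mul] at hfin
  linarith

lemma carath_scaled {n : ℕ} {p : ℝ≥0∞} (hp : 1 ≤ p) {f : (Fin n → ℂ) → ℂ} {a : (Fin n → ℕ) → ℂ}
    (hf : ∀ z : Fin n → ℂ, pNorm p z < 1 → HasSum (fun α => a α * mono z α) (f z))
    {M : ℝ} (hM : ∀ w, pNorm p w < 1 → ‖f w‖ ≤ M) (m : ℕ)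
    (z : Fin n → ℂ) (s : ℝ) (hs : 0 < s) (hz : pNorm p z ≤ s) :
    ‖∑ α ∈ idx n (m+1), a α * mono z α‖ ≤ 2 * (M - ‖a 0‖) * s ^ (m+1) := by
  have ht : Filter.Tendsto (fun s' : ℝ => 2 * (M - ‖a 0‖) * s' ^ (m+1)) (nhdsWithin s (Set.Ioi s))
      (nhds (2 * (M - ‖a 0‖) * s ^ (m+1))) :=
    ((by fun_prop : Continuous (fun s' : ℝ => 2 * (M - ‖a 0‖) * s' ^ (m+1))).tendsto s).mono_left
      nhdsWithin_le_nhds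
  refine ge_of_tendsto ht ?_
  filter_upwards [self_mem_nhdsWithin] with s' hs'
  have hs'0 : 0 < s' := hs.trans hs'
  have h1 := carath hp hf hM (m := m+1) (by omega) (fun i => ((s'⁻¹ : ℝ) : ℂ) * z i) (by
    rw [pNorm_smul hp, Complex.norm_real, Real.norm_of_nonneg (by positivity),
      inv_mul_lt_iff₀ hs'0, mul_one]
    exact hz.trans_lt hs')
  have h2 : ∑ α ∈ idx n (m+1), a α * mono (fun i => ((s'⁻¹ : ℝ) : ℂ) * z i) α =
      ((s'⁻¹ : ℝ) : ℂ) ^ (m+1) * ∑ α ∈ idx n (m+1), a α * mono z α := by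
    rw [Finset.mul_sum]
    apply Finset.sum_congr rfl
    intro α hα
    rw [mono_smul, mem_idx.mp hα]; ring
  rw [h2, norm_mul, norm_pow, Complex.norm_real, Real.norm_of_nonneg (by positivity), inv_pow,
    inv_mul_le_iff₀ (by positivity)] at h1
  linarith

/-! ### Conclusion -/

lemma geo (K : ℕ) : ∑ m ∈ range K, ((1:ℝ) / 3) ^ (m+1) ≤ 1 / 2 := by
  have : ∑ m ∈ range K, ((1:ℝ) / 3) ^ (m+1) = (1 - (1/3) ^ K) / 2 := by
    induction K with
    | zero => simp
    | succ K ih => rw [Finset.sum_range_succ, ih]; ring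
  rw [this]
  have : (0:ℝ) < (1/3) ^ K := by positivity
  linarith

lemma radius_bound {n : ℕ} (hn : 2 ≤ n) (m : ℕ) {σ : ℝ} (h0 : 0 ≤ σ) (h1 : σ ≤ 1) :
    ((1 / 144) * (Real.log n / n) ^ σ) ^ (m+1) * ((idx n m).card : ℝ) ^ σ ≤ (1 / 18) ^ (m+1) := by
  have hL0 : 0 ≤ Real.log n / n := div_nonneg (Real.log_natCast_nonneg n) (by positivity)
  have h := numeric hn m
  have e : ((Real.log n / n) ^ σ) ^ (m+1) = ((Real.log n / n) ^ (m+1)) ^ σ := by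
    rw [← Real.rpow_natCast, ← Real.rpow_natCast, ← Real.rpow_mul hL0, ← Real.rpow_mul hL0, mul_comm]
  rw [mul_pow, e, mul_assoc, ← Real.mul_rpow (by positivity) (by positivity)]
  calc _ ≤ (1 / 144 : ℝ) ^ (m+1) * (8 ^ (m+1)) ^ σ := by gcongr
    _ ≤ (1 / 144 : ℝ) ^ (m+1) * (8 ^ (m+1)) := by
        gcongr
        calc _ ≤ ((8:ℝ) ^ (m+1)) ^ (1:ℝ) :=
              Real.rpow_le_rpow_of_exponent_le (one_le_pow₀ (by norm_num)) h1
          _ = _ := Real.rpow_one _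
    _ = _ := by rw [← mul_pow]; norm_num

lemma hom_bound {n : ℕ} (hn : 2 ≤ n) {p : ℝ≥0∞} (hp : 1 ≤ p) (m : ℕ) (a : (Fin n → ℕ) → ℂ) {A : ℝ}
    (hA0 : 0 ≤ A)
    (hA : ∀ z s, 0 < s → pNorm p z ≤ s → ‖∑ α ∈ idx n (m+1), a α * mono z α‖ ≤ A * s ^ (m+1))
    (z : Fin n → ℂ)
    (hz : pNorm p z ≤ (1 / 144) * (Real.log n / n) ^ (1 - 1 / (min p 2).toReal)) :
    ∑ α ∈ idx n (m+1), ‖a α * mono z α‖ ≤ A * (1 / 3) ^ (m+1) := by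
  have hL0 : 0 < Real.log n / n :=
    div_pos (Real.log_pos (by exact_mod_cast hn)) (by positivity)
  rcases le_total p 2 with h2 | h2
  · rw [min_eq_left h2] at hz
    have hpt : p ≠ ∞ := ne_top_of_le_ne_top (by simp) h2
    have hq1 : 1 ≤ p.toReal := by
      have := ENNReal.toReal_mono hpt hp
      simpa using this
    have hσ : 1 / p.toReal ≤ 1 := by rw [div_le_one (by linarith)]; exact hq1
    have hσ' : 0 ≤ 1 / p.toReal := by positivity
    have h := hom_low hp hpt a (ρ := (1 / 144) * (Real.log n / n) ^ (1 - 1 / p.toReal))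
      (by positivity) hA z hz
    have hr := radius_bound hn m (σ := 1 - 1 / p.toReal) (by linarith) (by linarith)
    simp_rw [norm_mul]
    refine h.trans ?_
    calc _ = A * 2 ^ (m+1) * 3 ^ m * (((1 / 144) * (Real.log n / n) ^ (1 - 1 / p.toReal)) ^ (m+1) *
          ((idx n m).card : ℝ) ^ (1 - 1 / p.toReal)) := by ring
      _ ≤ A * 2 ^ (m+1) * 3 ^ (m+1) * (1 / 18) ^ (m+1) := by
          gcongr <;> norm_num
      _ = _ := by
          rw [mul_assoc, mul_assoc, ← mul_pow, ← mul_pow]; norm_num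
  · rw [min_eq_right h2] at hz
    have e2 : (1 : ℝ) - 1 / (2 : ℝ≥0∞).toReal = 1 / 2 := by norm_num
    rw [e2] at hz
    set ρ := (1 / 144) * (Real.log n / n) ^ (1 / 2 : ℝ) with hρ
    have hρ0 : 0 < ρ := by positivity
    have h := hom_high (m := m) (fun α => a α * mono z α) (A := A * ρ ^ (m+1)) (by
      intro w s hs hw
      have := hA (fun i => z i * w i) (s * ρ) (by positivity) (by
        have h3 : pNorm p (fun i => z i * w i) ≤ pNorm p (fun i => (s : ℂ) * z i) := by
          apply pNorm_mono hp
          intro i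
          rw [norm_mul, norm_mul, Complex.norm_real, Real.norm_of_nonneg hs.le, mul_comm]
          gcongr
          exact (pNorm_top_le hs.le).1 hw i
        refine h3.trans ?_
        rw [pNorm_smul hp, Complex.norm_real, Real.norm_of_nonneg hs.le]
        gcongr)
      simp_rw [mono_mul, ← mul_assoc] at this
      refine this.trans (le_of_eq ?_)
      rw [mul_pow]; ring)
    have hr := radius_bound hn m (σ := 1 / 2) (by norm_num) (by norm_num)
    rw [← hρ] at hr
    rw [Real.sqrt_eq_rpow] at h
    refine h.trans ?_
    calc _ = A * 4 ^ (m+1) * (ρ ^ (m+1) * ((idx n m).card : ℝ) ^ (1 / 2 : ℝ)) := by ring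
      _ ≤ A * 4 ^ (m+1) * (1 / 18) ^ (m+1) := by gcongr
      _ = A * (2 / 9) ^ (m+1) := by rw [mul_assoc, ← mul_pow]; norm_num
      _ ≤ _ := mul_le_mul_of_nonneg_left
          (pow_le_pow_left₀ (by norm_num) (by norm_num) _) hA0

/-- Lower bound for the Bohr radius of the unit ball of `ℓ_p^n`: there is `C > 0` such
that, with `r = (1/C)·(log n / n)^{1-1/min(p,2)}`, every bounded holomorphic function
`f(z) = ∑_α a_α z^α` on the open unit ball `B` of `ℓ_p^n` satisfies
`∑_α |a_α z^α| ≤ sup_{w ∈ B} |f(w)|` whenever `‖z‖_p ≤ r`. -/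
theorem bohr_radius_lower_bound :
    ∃ C : ℝ, 0 < C ∧ ∀ (p : ℝ≥0∞), 1 ≤ p → ∀ n : ℕ, 2 ≤ n →
      ∀ (f : (Fin n → ℂ) → ℂ) (a : (Fin n → ℕ) → ℂ),
        (∀ z : Fin n → ℂ, pNorm p z < 1 →
          HasSum (fun α : Fin n → ℕ => a α * ∏ i, z i ^ α i) (f z)) →
        BddAbove {x : ℝ | ∃ w : Fin n → ℂ, pNorm p w < 1 ∧ x = ‖f w‖} →
        ∀ z : Fin n → ℂ,
          pNorm p z ≤ (1 / C) * (Real.log n / n) ^ (1 - 1 / (min p 2).toReal) →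
          ∃ s : ℝ, HasSum (fun α : Fin n → ℕ => ‖a α * ∏ i, z i ^ α i‖) s ∧
            s ≤ sSup {x : ℝ | ∃ w : Fin n → ℂ, pNorm p w < 1 ∧ x = ‖f w‖} := by
  refine ⟨144, by norm_num, ?_⟩
  intro p hp n hn f a hf hbdd z hz
  set X : Set ℝ := {x : ℝ | ∃ w : Fin n → ℂ, pNorm p w < 1 ∧ x = ‖f w‖} with hX
  have hf' : ∀ z : Fin n → ℂ, pNorm p z < 1 → HasSum (fun α => a α * mono z α) (f z) := hf
  have hM : ∀ w, pNorm p w < 1 → ‖f w‖ ≤ sSup X := fun w hw => le_csSup hbdd ⟨w, hw, rfl⟩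
  set M := sSup X with hMdef
  have h00 : pNorm p (fun _ : Fin n => (0:ℂ)) < 1 := by
    have := pNorm_smul hp (0:ℂ) (fun _ : Fin n => (0:ℂ))
    simp only [norm_zero, zero_mul] at this
    rw [this]; norm_num
  have ha0 : ‖a 0‖ ≤ M := by
    have h1 := carath hp hf' hM le_rfl _ h00
    have h2 := norm_nonneg (∑ α ∈ idx n 1, a α * mono (fun _ : Fin n => (0:ℂ)) α)
    linarith
  set A := 2 * (M - ‖a 0‖) with hA
  have hA0 : 0 ≤ A := by rw [hA]; linarith
  have hom : ∀ m, ∑ α ∈ idx n (m+1), ‖a α * mono z α‖ ≤ A * (1 / 3) ^ (m+1) := fun m =>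
    hom_bound hn hp m a hA0 (carath_scaled hp hf' hM m) z hz
  have hfin : ∀ S : Finset (Fin n → ℕ), ∑ α ∈ S, ‖a α * mono z α‖ ≤ M := by
    intro S
    obtain ⟨K, hK⟩ : ∃ K, ∀ α ∈ S, ∑ i, α i ≤ K :=
      ⟨S.sup (fun α => ∑ i, α i), fun α hα => Finset.le_sup (f := fun α => ∑ i, α i) hα⟩
    rw [← Finset.sum_fiberwise_of_maps_to (t := range (K+1)) (g := fun α => ∑ i, α i)
      (fun α hα => by have := hK α hα; simp; omega)]
    calc _ ≤ ∑ m ∈ range (K+1), ∑ α ∈ idx n m, ‖a α * mono z α‖ := by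
          apply Finset.sum_le_sum
          intro m _
          apply Finset.sum_le_sum_of_subset_of_nonneg
          · intro α hα
            rw [mem_idx]; exact (Finset.mem_filter.mp hα).2
          · intros; positivity
      _ = ∑ m ∈ range K, ∑ α ∈ idx n (m+1), ‖a α * mono z α‖ + ‖a 0‖ := by
          rw [Finset.sum_range_succ']
          congr 1
          simp [idx, mono]
      _ ≤ ∑ m ∈ range K, A * (1 / 3) ^ (m+1) + ‖a 0‖ := by
          gcongr with m _
          exact hom m
      _ ≤ A * (1 / 2) + ‖a 0‖ := by
          rw [← Finset.mul_sum]
          gcongr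
          exact geo K
      _ = M := by rw [hA]; ring
  have hs : Summable (fun α => ‖a α * mono z α‖) :=
    summable_of_sum_le (fun _ => norm_nonneg _) hfin
  exact ⟨_, hs.hasSum, hs.tsum_le_of_sum_le hfin⟩
end

section
/- For all positive integers m and n and every m-linear form A : ℂ^n × ⋯ × ℂ^n → ℂ (m factors), one has (∑_{i₁,…,i_m = 1}^n |A(e_{i₁}, …, e_{i_m})|^{2m/(m+1)})^{(m+1)/(2m)} ≤ (√2)^{m-1} · sup_{x₁,…,x_m ∈ 𝔻^n} |A(x₁, …, x_m)|. (Multilinear Bohnenblust–Hille inequality with the Davie–Kaijser constant.) -/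
open Finset

namespace BH
noncomputable def u : Fin 4 → ℂ := ![1, Complex.I, -1, -Complex.I]

lemma norm_u (e : Fin 4) : ‖u e‖ = 1 := by fin_cases e <;> simp [u]

variable {H : Type*} [NormedAddCommGroup H] [InnerProductSpace ℂ H]

lemma nsq (c : ℂ) (hc : ‖c‖ = 1) (x y : H) :
    ‖c • y + x‖ ^ 2 = ‖x‖ ^ 2 + ‖y‖ ^ 2 + 2 * (c * inner ℂ x y).re := by
  rw [add_comm, norm_add_sq (𝕜 := ℂ), inner_smul_right, norm_smul, hc]
  simp; ring

lemma step2 (x y : H) : ∑ e, ‖u e • y + x‖ ^ 2 = 4 * (‖x‖ ^ 2 + ‖y‖ ^ 2) := by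
  simp only [fun e => nsq (u e) (norm_u e) x y]
  simp [Fin.sum_univ_four, u]; ring

lemma step4 (x y : H) : ∑ e, ‖u e • y + x‖ ^ 4
    ≤ 4 * (‖x‖ ^ 4 + 4 * ‖x‖ ^ 2 * ‖y‖ ^ 2 + ‖y‖ ^ 4) := by
  have h : ∀ e, ‖u e • y + x‖ ^ 4 = (‖x‖ ^ 2 + ‖y‖ ^ 2 + 2 * (u e * inner ℂ x y).re) ^ 2 := by
    intro e; rw [← nsq (u e) (norm_u e) x y]; ring
  have h2 : (inner ℂ x y).re ^ 2 + (inner ℂ x y).im ^ 2 ≤ ‖x‖ ^ 2 * ‖y‖ ^ 2 := by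
    have h3 := norm_inner_le_norm (𝕜 := ℂ) x y
    have h4 : ‖(inner ℂ x y : ℂ)‖ ^ 2 = (inner ℂ x y).re ^ 2 + (inner ℂ x y).im ^ 2 := by
      rw [← Complex.normSq_eq_norm_sq, Complex.normSq_apply]; ring
    rw [← h4, ← mul_pow]
    gcongr
  simp only [h]
  simp [Fin.sum_univ_four, u]
  nlinarith

lemma sum_cons {n : ℕ} (f : (Fin (n+1) → Fin 4) → ℝ) :
    ∑ w, f w = ∑ w : Fin n → Fin 4, ∑ e, f (Fin.cons e w) := by
  rw [← (Fin.consEquiv (fun _ => Fin 4)).sum_comp, Fintype.sum_prod_type, Finset.sum_comm]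
  rfl

lemma mom2 {n : ℕ} (a : Fin n → H) :
    ∑ w : Fin n → Fin 4, ‖∑ k, u (w k) • a k‖ ^ 2 = 4 ^ n * ∑ k, ‖a k‖ ^ 2 := by
  induction n with
  | zero => simp
  | succ n ih =>
    rw [sum_cons]
    simp only [Fin.sum_univ_succ (n := n), Fin.cons_zero, Fin.cons_succ, step2]
    rw [← Finset.mul_sum, Finset.sum_add_distrib, ih]
    simp; ring

lemma mom4 {n : ℕ} (a : Fin n → H) :
    ∑ w : Fin n → Fin 4, ‖∑ k, u (w k) • a k‖ ^ 4 ≤ 4 ^ n * (2 * (∑ k, ‖a k‖ ^ 2) ^ 2) := by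
  induction n with
  | zero => simp
  | succ n ih =>
    rw [sum_cons]
    simp only [Fin.sum_univ_succ (n := n), Fin.cons_zero, Fin.cons_succ]
    refine (Finset.sum_le_sum fun w _ => step4 _ _).trans ?_
    rw [← Finset.mul_sum, Finset.sum_add_distrib, Finset.sum_add_distrib, ← Finset.sum_mul,
      ← Finset.mul_sum, mom2 (fun k => a k.succ)]
    have h := ih (fun k => a k.succ)
    have hp : (0:ℝ) ≤ 4 ^ n * ‖a 0‖ ^ 4 := by positivity
    simp only [Finset.sum_const, Finset.card_univ, Fintype.card_fun, Fintype.card_fin, nsmul_eq_mul,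
      Nat.cast_pow, Nat.cast_ofNat]
    rw [pow_succ (4:ℝ) n]
    nlinarith

lemma khin {n : ℕ} (a : Fin n → H) :
    4 ^ n * √(∑ k, ‖a k‖ ^ 2) ≤ √2 * ∑ w : Fin n → Fin 4, ‖∑ k, u (w k) • a k‖ := by
  set σ := √(∑ k, ‖a k‖ ^ 2) with hσ
  have hs2 : ∑ k, ‖a k‖ ^ 2 = σ ^ 2 := by rw [hσ, Real.sq_sqrt]; positivity
  have hσ0 : 0 ≤ σ := Real.sqrt_nonneg _
  rcases hσ0.eq_or_lt with h0 | h0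
  · rw [← h0]; simp; positivity
  have h2 := mom2 a
  have h4 := mom4 a
  rw [hs2] at h2 h4
  have hr : √2 ^ 2 = (2:ℝ) := Real.sq_sqrt (by norm_num)
  have hr0 : 0 ≤ √2 := Real.sqrt_nonneg _
  have key : ∀ s : ℝ, 0 ≤ s → 6 * σ ^ 2 * s ^ 2 - s ^ 4 ≤ 4 * √2 * σ ^ 3 * s := by
    intro s hs
    have : 0 ≤ s * (s - √2 * σ) ^ 2 * (s + 2 * √2 * σ) := by positivity
    have e : s * (s - √2 * σ) ^ 2 * (s + 2 * √2 * σ) =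
      s ^ 4 - 3 * √2 ^ 2 * σ ^ 2 * s ^ 2 + 2 * √2 ^ 2 * √2 * σ ^ 3 * s := by ring
    rw [e, hr] at this
    linarith
  have := Finset.sum_le_sum fun (w : Fin n → Fin 4) (_ : w ∈ Finset.univ) =>
    key ‖∑ k, u (w k) • a k‖ (norm_nonneg _)
  rw [Finset.sum_sub_distrib, ← Finset.mul_sum, ← Finset.mul_sum, h2] at this
  have h5 : 0 < 4 * σ ^ 3 := by positivity
  refine le_of_mul_le_mul_left ?_ h5
  nlinarith

lemma khin_ex {n : ℕ} {J : Type*} [Fintype J] (a : J → Fin n → H) :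
    ∃ w : Fin n → ℂ, (∀ k, ‖w k‖ ≤ 1) ∧
      ∑ j, √(∑ k, ‖a j k‖ ^ 2) ≤ √2 * ∑ j, ‖∑ k, w k • a j k‖ := by
  obtain ⟨w, -, hw⟩ := Finset.exists_le_of_sum_le (s := (Finset.univ : Finset (Fin n → Fin 4)))
    (f := fun _ => ∑ j, √(∑ k, ‖a j k‖ ^ 2))
    (g := fun w => √2 * ∑ j, ‖∑ k, u (w k) • a j k‖) Finset.univ_nonempty (by
      rw [← Finset.mul_sum, Finset.sum_comm, Finset.sum_comm (t := Finset.univ (α := J)),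
        Finset.mul_sum]
      refine Finset.sum_le_sum fun j _ => ?_
      simpa using khin (a j))
  exact ⟨fun k => u (w k), fun k => (norm_u _).le, hw⟩

lemma mixed {n d : ℕ} {J : Type*} [Fintype J]
    (A : J → MultilinearMap ℂ (fun _ : Fin d => (Fin n → ℂ)) ℂ) :
    ∃ w : Fin d → Fin n → ℂ, (∀ k j, ‖w k j‖ ≤ 1) ∧
      ∑ j, √(∑ i : Fin d → Fin n, ‖A j (fun k => Pi.single (i k) 1)‖ ^ 2)
        ≤ √2 ^ d * ∑ j, ‖A j w‖ := by
  induction d with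
  | zero =>
    refine ⟨fun k => k.elim0, fun k => k.elim0, ?_⟩
    simp only [pow_zero, one_mul]
    refine Finset.sum_le_sum fun j _ => ?_
    simp only [Fintype.sum_unique]
    rw [Real.sqrt_sq (norm_nonneg _)]
    apply le_of_eq; congr 2; ext k; exact k.elim0
  | succ d ih =>
    obtain ⟨w0, hw0, h0⟩ := khin_ex (H := EuclideanSpace ℂ (Fin d → Fin n))
      (fun j k => WithLp.toLp 2 fun i : Fin d → Fin n =>
        A j (Fin.cons (Pi.single k 1) (fun l => Pi.single (i l) 1)))
    obtain ⟨w, hw, h⟩ := ih (fun j => (A j).curryLeft w0)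
    refine ⟨Fin.cons w0 w, fun k => Fin.cases (by simpa using hw0) (by simpa using hw) k, ?_⟩
    have e1 : ∀ j, ∑ i : Fin (d+1) → Fin n, ‖A j (fun k => Pi.single (i k) 1)‖ ^ 2 =
        ∑ k, ‖(WithLp.toLp 2 fun i : Fin d → Fin n =>
        A j (Fin.cons (Pi.single k 1) (fun l => Pi.single (i l) 1)) : EuclideanSpace ℂ _)‖ ^ 2 := by
      intro j
      rw [← (Fin.consEquiv (fun _ => Fin n)).sum_comp, Fintype.sum_prod_type]
      refine Finset.sum_congr rfl fun k _ => ?_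
      rw [EuclideanSpace.norm_sq_eq]
      refine Finset.sum_congr rfl fun i _ => ?_
      congr 3
      ext l
      refine Fin.cases ?_ (fun l => ?_) l <;> simp [Fin.consEquiv]
    have e2 : ∀ j, ‖∑ k, w0 k • (WithLp.toLp 2 fun i : Fin d → Fin n =>
        A j (Fin.cons (Pi.single k 1) (fun l => Pi.single (i l) 1)) : EuclideanSpace ℂ _)‖ =
        √(∑ i : Fin d → Fin n, ‖(A j).curryLeft w0 (fun k => Pi.single (i k) 1)‖ ^ 2) := by
      intro j
      rw [EuclideanSpace.norm_eq]
      congr 1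
      refine Finset.sum_congr rfl fun i _ => ?_
      congr 2
      have : w0 = ∑ k, w0 k • (Pi.single k 1 : Fin n → ℂ) := by
        simpa using (pi_eq_sum_univ' w0)
      conv_rhs => rw [this, map_sum]
      simp
    simp only [e1]
    refine h0.trans ?_
    simp only [e2]
    rw [pow_succ, mul_comm (√2 ^ d), mul_assoc]
    gcongr
    exact h


lemma interp {m n : ℕ} (a : (Fin m → Fin n) → ℝ) (b : Fin m → Fin n → ℝ) (C : ℝ) (hC : 0 < C)
    (hm : 0 < m)
    (ha : ∀ I, 0 ≤ a I) (hab : ∀ I k, a I ≤ b k (I k)) (hb : ∀ k i, 0 ≤ b k i)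
    (h1 : ∀ k, ∑ i, b k i ≤ C) (h2 : ∀ k, ∑ I, a I ^ 2 / b k (I k) ≤ C) :
    (∑ I, a I ^ ((2 * (m : ℝ)) / ((m : ℝ) + 1))) ^ (((m : ℝ) + 1) / (2 * (m : ℝ))) ≤ C := by
  set p : ℝ := (2 * (m : ℝ)) / ((m : ℝ) + 1) with hp
  have hm' : (0:ℝ) < m := by exact_mod_cast hm
  have hp0 : 0 < p := by positivity
  have key : ∀ I, (a I / C) ^ p ≤
      ((m:ℝ) + 1)⁻¹ * (∏ k, (b k (I k) / C) + ∑ k, (a I ^ 2 / b k (I k)) / C) := by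
    intro I
    rcases (ha I).eq_or_lt with h0 | h0
    · rw [← h0, zero_div, Real.zero_rpow hp0.ne']
      have : 0 ≤ ∏ k, (b k (I k) / C) := Finset.prod_nonneg fun k _ => div_nonneg (hb _ _) hC.le
      have h' : 0 ≤ ∑ k, ((0:ℝ) ^ 2 / b k (I k)) / C := by simp
      positivity
    have hbp : ∀ k, 0 < b k (I k) := fun k => h0.trans_le (hab I k)
    have hP : 0 < ∏ k, (b k (I k) / C) := Finset.prod_pos fun k _ => div_pos (hbp k) hC
    have := Real.geom_mean_le_arith_mean_weighted (Finset.univ : Finset (Fin (m+1)))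
      (fun _ => ((m:ℝ) + 1)⁻¹)
      (Fin.cons (∏ k, (b k (I k) / C)) (fun k => (a I ^ 2 / b k (I k)) / C))
      (fun _ _ => by positivity) (by simp; field_simp)
      (fun k _ => by
        refine Fin.cases ?_ (fun k => ?_) k
        · exact hP.le
        · have := hbp k
          simp only [Fin.cons_succ]; positivity)
    rw [← Finset.mul_sum, Real.finsetProd_rpow, Fin.prod_univ_succ, Fin.sum_univ_succ] at this
    · simp only [Fin.cons_zero, Fin.cons_succ] at this
      refine le_trans (le_of_eq ?_) this
      rw [← Finset.prod_mul_distrib]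
      have e : ∀ k, b k (I k) / C * (a I ^ 2 / b k (I k) / C) = (a I / C) ^ 2 := by
        intro k
        have := hbp k
        field_simp
      simp only [e]
      simp only [Finset.prod_const, Finset.card_univ, Fintype.card_fin]
      rw [← pow_mul, ← Real.rpow_natCast, ← Real.rpow_mul (by positivity)]
      congr 1
      push_cast
      rw [hp, div_eq_mul_inv]
    · intro k _
      refine Fin.cases ?_ (fun k => ?_) k
      · exact hP.le
      · have := hbp k
        simp only [Fin.cons_succ]; positivity
  have hsum : ∑ I, (a I / C) ^ p ≤ 1 := by
    refine (Finset.sum_le_sum fun I _ => key I).trans ?_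
    rw [← Finset.mul_sum, Finset.sum_add_distrib, Finset.sum_comm]
    have t1 : ∑ I : Fin m → Fin n, ∏ k, (b k (I k) / C) ≤ 1 := by
      have := Finset.prod_univ_sum (fun _ : Fin m => (Finset.univ : Finset (Fin n)))
        (fun k i => b k i / C)
      rw [Fintype.piFinset_univ] at this
      rw [← this]
      refine Finset.prod_le_one (fun k _ => Finset.sum_nonneg fun i _ => div_nonneg (hb _ _) hC.le)
        fun k _ => ?_
      rw [← Finset.sum_div, div_le_one hC]
      exact h1 k
    have t2 : ∑ k, ∑ I : Fin m → Fin n, a I ^ 2 / b k (I k) / C ≤ m := by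
      refine (Finset.sum_le_card_nsmul _ _ 1 fun k _ => ?_).trans (by simp)
      rw [← Finset.sum_div, div_le_one hC]
      exact h2 k
    rw [inv_mul_le_iff₀ (by positivity)]
    linarith
  have hq : ((m : ℝ) + 1) / (2 * (m : ℝ)) = p⁻¹ := by rw [hp, inv_div]
  rw [hq, Real.rpow_inv_le_iff_of_pos (Finset.sum_nonneg fun I _ => Real.rpow_nonneg (ha I) _) hC.le hp0]
  simp only [fun I => Real.div_rpow (ha I) hC.le p] at hsum
  rwa [← Finset.sum_div, div_le_one (Real.rpow_pos_of_pos hC _)] at hsum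

lemma single_sum {n : ℕ} (x : Fin n → ℂ) : x = ∑ k, x k • (Pi.single k 1 : Fin n → ℂ) := by
  simpa using (pi_eq_sum_univ' x)

lemma bdd {m n : ℕ} (A : MultilinearMap ℂ (fun _ : Fin m => (Fin n → ℂ)) ℂ) :
    BddAbove {x : ℝ | ∃ z : Fin m → Fin n → ℂ, (∀ k j, ‖z k j‖ < 1) ∧ x = ‖A z‖} := by
  refine ⟨∑ i : Fin m → Fin n, ‖A (fun k => Pi.single (i k) 1)‖, ?_⟩
  rintro _ ⟨z, hz, rfl⟩
  have : z = fun k => ∑ j, z k j • (Pi.single j 1 : Fin n → ℂ) := funext fun k => single_sum (z k)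
  rw [this, A.map_sum]
  refine (norm_sum_le _ _).trans (Finset.sum_le_sum fun i _ => ?_)
  rw [A.map_smul_univ, norm_smul, norm_prod]
  exact mul_le_of_le_one_left (norm_nonneg _)
    (Finset.prod_le_one (fun _ _ => norm_nonneg _) fun k _ => (hz k _).le)

lemma le_sup {m n : ℕ} (A : MultilinearMap ℂ (fun _ : Fin m => (Fin n → ℂ)) ℂ)
    (z : Fin m → Fin n → ℂ) (hz : ∀ k j, ‖z k j‖ ≤ 1) :
    ‖A z‖ ≤ sSup {x : ℝ | ∃ z : Fin m → Fin n → ℂ, (∀ k j, ‖z k j‖ < 1) ∧ x = ‖A z‖} := by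
  set S := sSup {x : ℝ | ∃ z : Fin m → Fin n → ℂ, (∀ k j, ‖z k j‖ < 1) ∧ x = ‖A z‖}
  have h : ∀ t : ℝ, 0 < t → t < 1 → t ^ m * ‖A z‖ ≤ S := by
    intro t h0 h1
    refine le_csSup (bdd A) ⟨fun k => (t : ℂ) • z k, fun k j => ?_, ?_⟩
    · simp only [Pi.smul_apply, smul_eq_mul, norm_mul, Complex.norm_real, Real.norm_eq_abs,
        abs_of_pos h0]
      nlinarith [hz k j, norm_nonneg (z k j)]
    · rw [A.map_smul_univ (fun _ => (t:ℂ)) z, norm_smul]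
      simp [abs_of_pos h0]
  have hc : Filter.Tendsto (fun t : ℝ => t ^ m * ‖A z‖) (nhdsWithin 1 (Set.Iio 1))
      (nhds (1 ^ m * ‖A z‖)) :=
    (Continuous.tendsto (by fun_prop) 1).mono_left nhdsWithin_le_nhds
  rw [one_pow, one_mul] at hc
  refine le_of_tendsto hc ?_
  filter_upwards [Ioo_mem_nhdsLT (show (0:ℝ) < 1 by norm_num)] with t ht
  exact h t ht.1 ht.2

lemma mixed_sup {d n : ℕ} (A : MultilinearMap ℂ (fun _ : Fin (d+1) => (Fin n → ℂ)) ℂ)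
    (k : Fin (d+1)) :
    ∑ j : Fin n, √(∑ i : Fin d → Fin n,
        ‖A (fun l => Pi.single ((k.insertNth j i : Fin (d+1) → Fin n) l) 1)‖ ^ 2)
      ≤ √2 ^ d * sSup {x : ℝ | ∃ z : Fin (d+1) → Fin n → ℂ, (∀ k j, ‖z k j‖ < 1) ∧ x = ‖A z‖} := by
  obtain ⟨w, hw, h⟩ := mixed (fun j : Fin n => MultilinearMap.curryMid k A (Pi.single j 1))
  have e : ∀ (j : Fin n) (i : Fin d → Fin n),
      MultilinearMap.curryMid k A (Pi.single j 1) (fun l => Pi.single (i l) 1) =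
      A (fun l => Pi.single ((k.insertNth j i : Fin (d+1) → Fin n) l) 1) := by
    intro j i
    rw [MultilinearMap.curryMid_apply_apply]
    congr 1
    rw [Fin.insertNth_eq_iff]
    constructor
    · simp
    · ext l; simp [Fin.removeNth]
  simp only [e] at h
  refine h.trans ?_
  gcongr
  set c : Fin n → ℂ := fun j => MultilinearMap.curryMid k A (Pi.single j 1) w with hc
  have hph : ∀ j, ∃ v : ℂ, ‖v‖ ≤ 1 ∧ v * c j = (‖c j‖ : ℂ) := by
    intro j
    by_cases h0 : c j = 0
    · exact ⟨0, by simp, by simp [h0]⟩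
    · refine ⟨‖c j‖ / c j, ?_, by field_simp⟩
      rw [norm_div]; simp [h0]
  choose v hv hvc using hph
  have hA : A (k.insertNth v w) = ((∑ j, ‖c j‖ : ℝ) : ℂ) := by
    rw [← MultilinearMap.curryMid_apply_apply]
    conv_lhs => rw [single_sum v, map_sum]
    push_cast
    rw [Finset.sum_apply]
    refine Finset.sum_congr rfl fun j _ => ?_
    rw [← hvc j, map_smul, MultilinearMap.smul_apply, smul_eq_mul]
  have hn : ‖A (k.insertNth v w)‖ = ∑ j, ‖c j‖ := by
    rw [hA, Complex.norm_real, Real.norm_of_nonneg (by positivity)]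
  rw [← hn]
  refine le_sup A _ fun l j => ?_
  refine Fin.succAboveCases k ?_ (fun l => ?_) l
  · simpa using hv j
  · simpa using hw l j

end BH

/-- Multilinear Bohnenblust–Hille inequality with the Davie–Kaijser constant `√2^(m-1)`. -/
theorem multilinear_bohnenblust_hille (m n : ℕ) (hm : 0 < m) (hn : 0 < n)
    (A : MultilinearMap ℂ (fun _ : Fin m => (Fin n → ℂ)) ℂ) :
    (∑ i : Fin m → Fin n,
        ‖A (fun k => Pi.single (i k) 1)‖ ^ ((2 * (m : ℝ)) / ((m : ℝ) + 1)))
          ^ (((m : ℝ) + 1) / (2 * (m : ℝ)))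
      ≤ Real.sqrt 2 ^ (m - 1) *
        sSup {x : ℝ | ∃ z : Fin m → Fin n → ℂ,
          (∀ k j, ‖z k j‖ < 1) ∧ x = ‖A z‖} := by
  obtain ⟨d, rfl⟩ : ∃ d, m = d + 1 := ⟨m - 1, by omega⟩
  rw [Nat.add_sub_cancel]
  have hM := BH.mixed_sup A
  set M := √2 ^ d * sSup {x : ℝ | ∃ z : Fin (d+1) → Fin n → ℂ,
          (∀ k j, ‖z k j‖ < 1) ∧ x = ‖A z‖} with hMdef
  have hM0 : 0 ≤ M := (Finset.sum_nonneg fun j _ => Real.sqrt_nonneg _).trans (hM 0)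
  set b : Fin (d+1) → Fin n → ℝ := fun k j => √(∑ i : Fin d → Fin n,
        ‖A (fun l => Pi.single ((k.insertNth j i : Fin (d+1) → Fin n) l) 1)‖ ^ 2) with hb
  refine le_of_forall_gt_imp_ge_of_dense fun C hC => ?_
  refine BH.interp (fun I => ‖A (fun k => Pi.single (I k) 1)‖) b C (hM0.trans_lt hC) hm
    (fun _ => norm_nonneg _) ?_ (fun _ _ => Real.sqrt_nonneg _) (fun k => (hM k).trans hC.le) ?_
  · intro I k
    refine Real.le_sqrt_of_sq_le ?_
    have := Finset.single_le_sum (f := fun i : Fin d → Fin n =>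
      ‖A (fun l => Pi.single ((k.insertNth (I k) i : Fin (d+1) → Fin n) l) 1)‖ ^ 2)
      (fun _ _ => by positivity) (Finset.mem_univ (k.removeNth I))
    simpa using this
  · intro k
    refine le_trans (le_of_eq ?_) ((hM k).trans hC.le)
    rw [← (Fin.insertNthEquiv (fun _ => Fin n) k).sum_comp, Fintype.sum_prod_type]
    refine Finset.sum_congr rfl fun j _ => ?_
    simp only [Fin.insertNthEquiv_apply, Fin.insertNth_apply_same]
    rw [← Finset.sum_div]
    exact Real.div_sqrt
end

section
/- For all positive integers m, n the following holds: whenever P₁, …, P_N are m-homogeneous polynomials on ℂ^n, P_t(z) = ∑_{|α|=m} a_α^{(t)} z^α, such that sup_{z ∈ 𝔻^n} |∑_{t=1}^N λ_t P_t(z)| ≤ 1 for every choice of complex scalars λ₁,…,λ_N with |λ_t| ≤ 1, then ∑_{t=1}^N (∑_{|α|=m} |a_α^{(t)}|²)^{1/2} ≤ (√2)^m. Equivalently, the 1-summing norm of the coefficient map T : 𝒫(^m ℓ_∞^n) → ℓ₂, ∑_{|α|=m} a_α z^α ↦ (a_α)_{|α|=m}, is at most (√2)^m. -/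
open Finset

/-- Evaluation of the `m`-homogeneous polynomial on `ℂ^n` with coefficient family `a`
(indexed by the multi-indices `α` with `|α| = m`) at the point `z`. -/
noncomputable def mhEval (n m : ℕ) (a : (Fin n → ℕ) → ℂ) (z : Fin n → ℂ) : ℂ :=
  ∑ α ∈ Finset.Nat.antidiagonalTuple n m, a α * ∏ i, z i ^ α i


open ComplexConjugate in
lemma oneSum_avg_coeff {f : ℂ → ℂ} (hf : DifferentiableOn ℂ f (Metric.closedBall 0 1)) (k : ℕ) :
    Real.circleAverage (fun z => f z * conj (z ^ k)) 0 1 = iteratedDeriv k f 0 / k.factorial := by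
  have h1 := hf.circleIntegral_one_div_sub_center_pow_smul one_pos k
  rw [Real.circleAverage_eq_circleIntegral one_ne_zero]
  have h2 : (∮ z in C(0, 1), (z - 0)⁻¹ • (f z * conj (z ^ k)))
      = ∮ z in C(0, 1), (1 / (z - 0) ^ (k + 1)) • f z := by
    apply circleIntegral.integral_congr zero_le_one
    intro z hz
    have hz1 : ‖z‖ = 1 := by simpa using hz
    have hc : conj z = z⁻¹ := by
      rw [Complex.inv_def, Complex.normSq_eq_norm_sq, hz1]; simp
    simp only [sub_zero, smul_eq_mul, map_pow, hc]
    rw [pow_succ]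
    simp
    ring
  rw [h2, h1]
  have := Complex.two_pi_I_ne_zero
  simp only [smul_eq_mul]
  field_simp

lemma oneSum_poly_coeff (d : ℕ) (b : ℕ → ℂ) {k : ℕ} (hk : k < d) :
    iteratedDeriv k (fun z : ℂ => ∑ j ∈ range d, b j * z ^ j) 0 / k.factorial = b k := by
  rw [iteratedDeriv_fun_sum (fun i _ => by fun_prop)]
  simp only [iteratedDeriv_const_mul_field, iteratedDeriv_fun_pow_zero]
  have : (k.factorial : ℂ) ≠ 0 := by exact_mod_cast k.factorial_ne_zero
  rw [Finset.sum_eq_single k]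
  · simp [this]
  · intro j _ hj; simp [hj.symm]; try tauto
  · simp [hk]

open ComplexConjugate in
lemma oneSum_bessel {f : ℂ → ℂ} (hf : DifferentiableOn ℂ f (Metric.closedBall 0 1)) (d : ℕ) :
    ∑ k ∈ range d, ‖iteratedDeriv k f 0 / k.factorial‖ ^ 2
      ≤ Real.circleAverage (fun z => ‖f z‖ ^ 2) 0 1 := by
  set b : ℕ → ℂ := fun k => iteratedDeriv k f 0 / k.factorial with hb
  set S : ℂ → ℂ := fun z => ∑ j ∈ range d, b j * z ^ j with hS
  have hfc : ContinuousOn f (Metric.sphere 0 1) :=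
    hf.continuousOn.mono Metric.sphere_subset_closedBall
  have hSd : Differentiable ℂ S := by rw [hS]; fun_prop
  have hSc : ContinuousOn S (Metric.sphere 0 1) := hSd.continuous.continuousOn
  set G : ℂ → ℂ := fun z => ∑ k ∈ range d,
    (conj (b k) • (S z * conj (z ^ k)) - (2 * conj (b k)) • (f z * conj (z ^ k))) with hG
  have hcont (k : ℕ) : ContinuousOn (fun z : ℂ => conj (z ^ k)) (Metric.sphere 0 1) := by
    apply Continuous.continuousOn
    exact Complex.continuous_conj.comp (by fun_prop)
  have i1 (k : ℕ) : CircleIntegrable (fun z => conj (b k) • (S z * conj (z ^ k))) 0 1 :=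
    ContinuousOn.circleIntegrable zero_le_one ((hSc.fun_mul (hcont k)).fun_const_smul _)
  have i2 (k : ℕ) : CircleIntegrable (fun z => (2 * conj (b k)) • (f z * conj (z ^ k))) 0 1 :=
    ContinuousOn.circleIntegrable zero_le_one ((hfc.fun_mul (hcont k)).fun_const_smul _)
  have iG : CircleIntegrable G 0 1 := by
    apply CircleIntegrable.fun_sum
    intro k _
    exact (i1 k).sub (i2 k)
  have avG : Real.circleAverage G 0 1 = ((-∑ k ∈ range d, ‖b k‖ ^ 2 : ℝ) : ℂ) := by
    have i12 (k : ℕ) : CircleIntegrable (fun z => conj (b k) • (S z * conj (z ^ k)) -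
        (2 * conj (b k)) • (f z * conj (z ^ k))) 0 1 := (i1 k).sub (i2 k)
    rw [hG, Real.circleAverage_fun_sum (fun k _ => i12 k)]
    push_cast
    rw [← Finset.sum_neg_distrib]
    apply Finset.sum_congr rfl
    intro k hk
    rw [Real.circleAverage_fun_sub (i1 k) (i2 k), Real.circleAverage_fun_smul,
      Real.circleAverage_fun_smul, oneSum_avg_coeff hf, oneSum_avg_coeff hSd.differentiableOn,
      hS, oneSum_poly_coeff d b (by simpa using hk)]
    have := Complex.conj_mul' (b k)
    change conj (b k) * b k - 2 * conj (b k) * b k = _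
    linear_combination -this
  have iGre : CircleIntegrable (fun z => (G z).re) 0 1 := by
    apply ContinuousOn.circleIntegrable zero_le_one
    apply Complex.continuous_re.comp_continuousOn
    rw [hG]
    apply continuousOn_finsetSum
    intro k _
    exact ((hSc.fun_mul (hcont k)).fun_const_smul _).fun_sub
      ((hfc.fun_mul (hcont k)).fun_const_smul _)
  have avGre : Real.circleAverage (fun z => (G z).re) 0 1 = -∑ k ∈ range d, ‖b k‖ ^ 2 := by
    have := Complex.reCLM.circleAverage_comp_comm iG
    rw [avG, Complex.reCLM_apply, Complex.ofReal_re] at this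
    exact this
  have i3 : CircleIntegrable (fun z => ‖f z‖ ^ 2) 0 1 :=
    ContinuousOn.circleIntegrable zero_le_one (hfc.norm.pow 2)
  have key : 0 ≤ Real.circleAverage (fun z => ‖f z‖ ^ 2 + (G z).re) 0 1 := by
    apply Real.circleAverage_nonneg_of_nonneg
    intro z _
    have hGz : G z = conj (S z) * (S z - 2 * f z) := by
      have : conj (S z) = ∑ k ∈ range d, conj (b k) * conj (z ^ k) := by
        rw [hS]; simp
      rw [this, Finset.sum_mul]
      apply Finset.sum_congr rfl
      intro k _
      simp only [smul_eq_mul]; ring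
    have : ‖f z‖ ^ 2 + (G z).re = ‖f z - S z‖ ^ 2 := by
      rw [hGz, ← Complex.normSq_eq_norm_sq, ← Complex.normSq_eq_norm_sq, Complex.normSq_apply,
        Complex.normSq_apply]
      simp
      ring
    rw [this]; positivity
  rw [Real.circleAverage_fun_add i3 iGre, avGre] at key
  linarith

def OneSumFact (F : ℂ → ℂ) : Prop :=
  ∃ g h : ℂ → ℂ, ∃ R : ℝ, 1 < R ∧ DifferentiableOn ℂ g (Metric.ball 0 R) ∧
    DifferentiableOn ℂ h (Metric.ball 0 R) ∧ (∀ z ∈ Metric.ball (0 : ℂ) R, F z = g z * h z) ∧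
    ∀ z : ℂ, ‖z‖ = 1 → ‖g z‖ = ‖h z‖

lemma OneSumFact.mul {F G : ℂ → ℂ} (hF : OneSumFact F) (hG : OneSumFact G) :
    OneSumFact (fun z => F z * G z) := by
  obtain ⟨g, h, R, hR, hg, hh, hp, hn⟩ := hF
  obtain ⟨g', h', R', hR', hg', hh', hp', hn'⟩ := hG
  have s1 : Metric.ball (0:ℂ) (min R R') ⊆ Metric.ball 0 R := Metric.ball_subset_ball (min_le_left _ _)
  have s2 : Metric.ball (0:ℂ) (min R R') ⊆ Metric.ball 0 R' := Metric.ball_subset_ball (min_le_right _ _)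
  refine ⟨fun z => g z * g' z, fun z => h z * h' z, min R R', lt_min hR hR',
    (hg.mono s1).mul (hg'.mono s2), (hh.mono s1).mul (hh'.mono s2), ?_, ?_⟩
  · intro z hz
    simp only [hp z (s1 hz), hp' z (s2 hz)]; ring
  · intro z hz
    simp [hn z hz, hn' z hz]

lemma OneSumFact.const (c : ℂ) : OneSumFact (fun _ => c) := by
  obtain ⟨s, hs⟩ := IsAlgClosed.exists_eq_mul_self c
  exact ⟨fun _ => s, fun _ => s, 2, by norm_num, by fun_prop, by fun_prop, by simp [hs], by simp⟩

/-- square root of `1 - u z` for `|u| < 1`. -/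
lemma oneSum_sqrt {u : ℂ} (hu : ‖u‖ < 1) : ∃ h : ℂ → ℂ, ∃ R : ℝ, 1 < R ∧
    DifferentiableOn ℂ h (Metric.ball 0 R) ∧ 
    ∀ z ∈ Metric.ball (0:ℂ) R, 1 - u * z = h z * h z ∧ h z ≠ 0 := by
  obtain ⟨R, hR, hR2⟩ : ∃ R : ℝ, 1 < R ∧ ‖u‖ * R < 1 := by
    refine ⟨2 / (1 + ‖u‖), ?_, ?_⟩
    · rw [lt_div_iff₀ (by positivity)]; linarith
    · rw [mul_div_assoc', div_lt_one (by positivity)]; linarith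
  have hmem : ∀ z ∈ Metric.ball (0:ℂ) R, 1 - u * z ∈ Complex.slitPlane := by
    intro z hz
    left
    have h1 : ‖u * z‖ < 1 := by
      rw [norm_mul]
      have : ‖z‖ < R := by simpa using hz
      nlinarith [norm_nonneg u]
    have h2 := Complex.re_le_norm (u * z)
    simp only [Complex.sub_re, Complex.one_re]
    linarith
  refine ⟨fun z => Complex.exp (Complex.log (1 - u * z) / 2), R, hR, ?_, ?_⟩
  · intro z hz
    apply DifferentiableAt.differentiableWithinAt
    have h1 : DifferentiableAt ℂ (fun z : ℂ => 1 - u * z) z := by fun_prop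
    exact ((h1.clog (hmem z hz)).div_const 2).cexp
  · intro z hz
    refine ⟨?_, Complex.exp_ne_zero _⟩
    rw [← Complex.exp_add, add_halves, Complex.exp_log (Complex.slitPlane_ne_zero (hmem z hz))]

lemma OneSumFact.root {w : ℂ} (hw : ‖w‖ ≠ 1) : OneSumFact (fun z => z - w) := by
  rcases lt_or_gt_of_ne hw with hw | hw
  · obtain ⟨h, R, hR, hd, hh⟩ := oneSum_sqrt (u := starRingEnd ℂ w) (by simpa using hw)
    refine ⟨fun z => (z - w) / h z, h, R, hR, ?_, hd, ?_, ?_⟩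
    · exact DifferentiableOn.div (by fun_prop) hd (fun z hz => (hh z hz).2)
    · intro z hz
      have := (hh z hz).2
      field_simp
    · intro z hz
      obtain ⟨h1, h2⟩ := hh z (by simpa [hz] using hR)
      have h3 : ‖z - w‖ = ‖h z‖ * ‖h z‖ := by
        rw [← norm_mul, ← h1]
        have : 1 - starRingEnd ℂ w * z = z * starRingEnd ℂ (z - w) := by
          have : z * starRingEnd ℂ z = 1 := by rw [Complex.mul_conj', hz]; simp
          rw [map_sub, mul_sub, this]; ring
        rw [this, norm_mul, hz, Complex.norm_conj, one_mul]
      rw [norm_div, h3]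
      have : ‖h z‖ ≠ 0 := by simpa using h2
      field_simp
  · have hw0 : w ≠ 0 := by rintro rfl; simp at hw; linarith
    obtain ⟨h, R, hR, hd, hh⟩ := oneSum_sqrt (u := w⁻¹) (by
      rw [norm_inv]; exact inv_lt_one_of_one_lt₀ hw)
    have h1 : OneSumFact (fun z => 1 - w⁻¹ * z) :=
      ⟨h, h, R, hR, hd, hd, fun z hz => (hh z hz).1, fun _ _ => rfl⟩
    have := (OneSumFact.const (-w)).mul h1
    convert this using 2 with z
    field_simp; ring

lemma OneSumFact.poly (p : Polynomial ℂ) (hp : ∀ z, ‖z‖ = 1 → p.eval z ≠ 0) :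
    OneSumFact (fun z => p.eval z) := by
  by_cases hp0 : p = 0
  · exact absurd (by simp [hp0]) (hp 1 (by simp))
  have hs := (IsAlgClosed.splits p).eq_prod_roots
  have hr : ∀ w ∈ p.roots, ‖w‖ ≠ 1 := by
    intro w hw h1
    exact hp w h1 (by simpa [hp0] using hw)
  have : ∀ s : Multiset ℂ, (∀ w ∈ s, ‖w‖ ≠ 1) →
      OneSumFact (fun z => ((s.map (fun a => Polynomial.X - Polynomial.C a)).prod).eval z) := by
    intro s
    induction s using Multiset.induction_on with
    | empty => intro _; simpa using OneSumFact.const 1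
    | cons a s ih =>
      intro h
      have := (OneSumFact.root (h a (by simp))).mul (ih (fun w hw => h w (by simp [hw])))
      simpa using this
  have h2 := (OneSumFact.const p.leadingCoeff).mul (this _ hr)
  rw [hs]
  simpa using h2

lemma oneSum_conv {g h : ℂ → ℂ} {R : ℝ} (hR : 1 < R) (hg : DifferentiableOn ℂ g (Metric.ball 0 R))
    (hh : DifferentiableOn ℂ h (Metric.ball 0 R)) (k : ℕ) :
    iteratedDeriv k (fun z => g z * h z) 0 / k.factorial = ∑ i ∈ range (k + 1),
      (iteratedDeriv i g 0 / i.factorial) * (iteratedDeriv (k - i) h 0 / (k - i).factorial) := by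
  have hm : Metric.ball (0:ℂ) R ∈ nhds (0:ℂ) := Metric.ball_mem_nhds _ (by linarith)
  rw [iteratedDeriv_fun_mul (hg.analyticAt hm).contDiffAt (hh.analyticAt hm).contDiffAt,
    Finset.sum_div]
  apply Finset.sum_congr rfl
  intro i hi
  have hi' : i ≤ k := by simp at hi; omega
  rw [Nat.cast_choose ℂ hi']
  have h1 : (k.factorial : ℂ) ≠ 0 := by exact_mod_cast k.factorial_ne_zero
  field_simp

lemma oneSum_two_pow (k : ℕ) : ((1:ℝ)/2) ^ k * (k + 1) ≤ 1 := by
  have : (k + 1 : ℝ) ≤ 2 ^ k := by exact_mod_cast Nat.lt_two_pow_self (n := k)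
  rw [div_pow, one_pow, one_div, inv_mul_le_iff₀ (by positivity)]
  linarith

lemma oneSum_conv_le (d : ℕ) (b c : ℕ → ℂ) :
    ∑ k ∈ range d, (1/2:ℝ)^k * ‖∑ i ∈ range (k+1), b i * c (k - i)‖^2
      ≤ (∑ k ∈ range d, ‖b k‖^2) * ∑ k ∈ range d, ‖c k‖^2 := by
  calc _ ≤ ∑ k ∈ range d, ∑ i ∈ range (k+1), ‖b i‖^2 * ‖c (k - i)‖^2 := by
        apply Finset.sum_le_sum
        intro k _
        have h1 : ‖∑ i ∈ range (k+1), b i * c (k - i)‖^2 ≤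
            (k+1) * ∑ i ∈ range (k+1), ‖b i‖^2 * ‖c (k - i)‖^2 := by
          calc _ ≤ (∑ i ∈ range (k+1), ‖b i * c (k - i)‖)^2 := by
                gcongr; exact norm_sum_le _ _
            _ ≤ (range (k+1)).card * ∑ i ∈ range (k+1), ‖b i * c (k - i)‖^2 :=
                sq_sum_le_card_mul_sum_sq
            _ = _ := by simp [mul_pow]
        have hn : 0 ≤ ∑ i ∈ range (k+1), ‖b i‖^2 * ‖c (k - i)‖^2 :=
          Finset.sum_nonneg (fun _ _ => by positivity)
        calc _ ≤ (1/2:ℝ)^k * ((k+1) * ∑ i ∈ range (k+1), ‖b i‖^2 * ‖c (k - i)‖^2) := by gcongr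
          _ = ((1/2:ℝ)^k * (k+1)) * ∑ i ∈ range (k+1), ‖b i‖^2 * ‖c (k - i)‖^2 := by ring
          _ ≤ _ := mul_le_of_le_one_left hn (oneSum_two_pow k)
    _ ≤ _ := by
        rw [Finset.sum_mul_sum, ← Finset.sum_product', Finset.sum_sigma']
        have hb : ∑ x ∈ (range d).sigma (fun k => range (k + 1)), ‖b x.2‖^2 * ‖c (x.1 - x.2)‖^2
            = ∑ x ∈ (range d ×ˢ range d).filter (fun x => x.1 + x.2 < d),
              ‖b x.1‖^2 * ‖c x.2‖^2 := by
          apply Finset.sum_nbij' (fun x => (x.2, x.1 - x.2)) (fun x => ⟨x.1 + x.2, x.1⟩)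
          · rintro ⟨k, i⟩ h; simp at h ⊢; omega
          · rintro ⟨k, i⟩ h; simp at h ⊢; omega
          · rintro ⟨k, i⟩ h; simp at h ⊢; omega
          · rintro ⟨k, i⟩ h; simp at h ⊢
          · rintro ⟨k, i⟩ h; simp
        rw [hb]
        exact Finset.sum_le_sum_of_subset_of_nonneg (Finset.filter_subset _ _)
          (fun _ _ _ => by positivity)

lemma oneSum_one_var (d : ℕ) (a : ℕ → ℂ)
    (hne : ∀ z : ℂ, ‖z‖ = 1 → ∑ j ∈ range d, a j * z ^ j ≠ 0) :
    Real.sqrt (∑ k ∈ range d, (1/2:ℝ)^k * ‖a k‖^2)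
      ≤ Real.circleAverage (fun z => ‖∑ j ∈ range d, a j * z ^ j‖) 0 1 := by
  set p : Polynomial ℂ := ∑ j ∈ range d, Polynomial.C (a j) * Polynomial.X ^ j with hp
  have hev : ∀ z, p.eval z = ∑ j ∈ range d, a j * z ^ j := by
    intro z; simp [hp, Polynomial.eval_finsetSum]
  obtain ⟨g, h, R, hR, hg, hh, hF, hn⟩ := OneSumFact.poly p (by simpa [hev] using hne)
  simp only [hev] at hF
  have hsub : Metric.closedBall (0:ℂ) 1 ⊆ Metric.ball 0 R := Metric.closedBall_subset_ball hR
  have hbg := oneSum_bessel (hg.mono hsub) d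
  have hbh := oneSum_bessel (hh.mono hsub) d
  have hz : ∀ z : ℂ, ‖z‖ = 1 → z ∈ Metric.ball (0:ℂ) R := by
    intro z hz; simpa [hz] using hR
  have e1 : Real.circleAverage (fun z => ‖g z‖ ^ 2) 0 1
      = Real.circleAverage (fun z => ‖∑ j ∈ range d, a j * z ^ j‖) 0 1 := by
    apply Real.circleAverage_congr_sphere
    intro z hz1
    have hz1 : ‖z‖ = 1 := by simpa using hz1
    simp only [hF z (hz z hz1), norm_mul, hn z hz1]; ring
  have e2 : Real.circleAverage (fun z => ‖h z‖ ^ 2) 0 1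
      = Real.circleAverage (fun z => ‖∑ j ∈ range d, a j * z ^ j‖) 0 1 := by
    apply Real.circleAverage_congr_sphere
    intro z hz1
    have hz1 : ‖z‖ = 1 := by simpa using hz1
    simp only [hF z (hz z hz1), norm_mul, hn z hz1]; ring
  rw [e1] at hbg
  rw [e2] at hbh
  have ha : ∀ k ∈ range d, a k = ∑ i ∈ range (k + 1),
      (iteratedDeriv i g 0 / i.factorial) * (iteratedDeriv (k - i) h 0 / (k - i).factorial) := by
    intro k hk
    rw [← oneSum_conv hR hg hh, ← oneSum_poly_coeff d a (by simpa using hk)]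
    congr 1
    apply Filter.EventuallyEq.iteratedDeriv_eq
    filter_upwards [Metric.ball_mem_nhds (0:ℂ) (by linarith : (0:ℝ) < R)] with z hz
    exact hF z hz
  have hle := oneSum_conv_le d (fun k => iteratedDeriv k g 0 / k.factorial)
    (fun k => iteratedDeriv k h 0 / k.factorial)
  have hav : 0 ≤ Real.circleAverage (fun z => ‖∑ j ∈ range d, a j * z ^ j‖) 0 1 :=
    Real.circleAverage_nonneg_of_nonneg (fun _ _ => norm_nonneg _)
  rw [Real.sqrt_le_left hav]
  calc _ = _ := Finset.sum_congr rfl (fun k hk => by rw [ha k hk])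
    _ ≤ _ := hle
    _ ≤ _ := by
      rw [sq]
      exact mul_le_mul hbg hbh (Finset.sum_nonneg (fun _ _ => by positivity)) hav

lemma oneSum_one_var_family {ι : Type} [Fintype ι] (d : ℕ) (a : ι → ℕ → ℂ)
    (h : ∀ z : ℂ, ‖z‖ < 1 → ∑ t, ‖∑ j ∈ range d, a t j * z ^ j‖ ≤ 1) :
    ∑ t, Real.sqrt (∑ k ∈ range d, (1/2:ℝ)^k * ‖a t k‖^2) ≤ 1 := by
  set p : ι → Polynomial ℂ := fun t =>
    ∑ j ∈ range d, Polynomial.C (a t j) * Polynomial.X ^ j with hp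
  have hev : ∀ t z, (p t).eval z = ∑ j ∈ range d, a t j * z ^ j := by
    intro t z; simp [hp, Polynomial.eval_finsetSum]
  have hcoeff : ∀ t, ∀ k ∈ range d, (p t).coeff k = a t k := by
    intro t k hk
    have hk' : k < d := by simpa using hk
    simp [hp, Polynomial.coeff_X_pow]
    intro hk2; omega
  set bad : Set ℝ := ⋃ t, norm '' ((p t).roots.toFinset : Set ℂ) with hbad
  have hfin : bad.Finite := Set.finite_iUnion (fun t => (Finset.finite_toSet _).image _)
  have hev1 : ∀ᶠ r : ℝ in nhdsWithin 1 (Set.Iio 1), r ∉ bad ∧ 0 < r ∧ r < 1 := by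
    have h1 : ∀ᶠ r : ℝ in nhds (1:ℝ), r ∈ (bad \ {1})ᶜ :=
      (hfin.subset Set.sdiff_subset).isClosed.isOpen_compl.mem_nhds (by simp)
    have h2 : ∀ᶠ r : ℝ in nhds (1:ℝ), 0 < r := lt_mem_nhds one_pos
    filter_upwards [nhdsWithin_le_nhds h1, nhdsWithin_le_nhds h2, self_mem_nhdsWithin]
      with r hr1 hr2 hr3
    have hr3 : r < 1 := hr3
    refine ⟨fun hb => hr1 ⟨hb, ?_⟩, hr2, hr3⟩
    simpa using hr3.ne
  have hlim : Filter.Tendsto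
      (fun r : ℝ => ∑ t, Real.sqrt (∑ k ∈ range d, (1/2:ℝ)^k * (‖a t k‖ * r ^ k)^2))
      (nhdsWithin 1 (Set.Iio 1))
      (nhds (∑ t, Real.sqrt (∑ k ∈ range d, (1/2:ℝ)^k * ‖a t k‖^2))) := by
    have hc : Continuous
      (fun r : ℝ => ∑ t, Real.sqrt (∑ k ∈ range d, (1/2:ℝ)^k * (‖a t k‖ * r ^ k)^2)) := by
      fun_prop
    have := hc.tendsto 1
    simp only [one_pow, mul_one] at this
    exact this.mono_left nhdsWithin_le_nhds
  apply le_of_tendsto hlim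
  filter_upwards [hev1] with r hr
  obtain ⟨hrb, hr0, hr1⟩ := hr
  have hrw : ∀ t (z : ℂ), ∑ j ∈ range d, (a t j * (r:ℂ) ^ j) * z ^ j
      = ∑ j ∈ range d, a t j * ((r:ℂ) * z) ^ j := by
    intro t z
    apply Finset.sum_congr rfl
    intro j _
    rw [mul_pow]; ring
  have hI : ∀ t, CircleIntegrable
      (fun z => ‖∑ j ∈ range d, (a t j * (r:ℂ) ^ j) * z ^ j‖) 0 1 := by
    intro t
    apply ContinuousOn.circleIntegrable zero_le_one
    apply Continuous.continuousOn
    fun_prop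
  have hone : ∀ t, Real.sqrt (∑ k ∈ range d, (1/2:ℝ)^k * (‖a t k‖ * r ^ k)^2)
      ≤ Real.circleAverage (fun z => ‖∑ j ∈ range d, (a t j * (r:ℂ) ^ j) * z ^ j‖) 0 1 := by
    intro t
    by_cases hpt : p t = 0
    · have : ∑ k ∈ range d, (1/2:ℝ)^k * (‖a t k‖ * r ^ k)^2 = 0 := by
        apply Finset.sum_eq_zero
        intro k hk
        rw [← hcoeff t k hk, hpt]; simp
      rw [this, Real.sqrt_zero]
      exact Real.circleAverage_nonneg_of_nonneg (fun _ _ => norm_nonneg _)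
    · have := oneSum_one_var d (fun k => a t k * (r:ℂ) ^ k) (by
        intro z hz h0
        rw [hrw, ← hev] at h0
        apply hrb
        rw [hbad, Set.mem_iUnion]
        refine ⟨t, (r:ℂ) * z, ?_, ?_⟩
        · simp only [Finset.mem_coe, Multiset.mem_toFinset]
          exact (Polynomial.mem_roots hpt).2 h0
        · simp [hz, abs_of_pos hr0])
      simpa [abs_of_pos hr0] using this
  calc _ ≤ ∑ t, Real.circleAverage
          (fun z => ‖∑ j ∈ range d, (a t j * (r:ℂ) ^ j) * z ^ j‖) 0 1 :=
        Finset.sum_le_sum (fun t _ => hone t)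
    _ = Real.circleAverage
          (fun z => ∑ t, ‖∑ j ∈ range d, (a t j * (r:ℂ) ^ j) * z ^ j‖) 0 1 :=
        (Real.circleAverage_fun_sum (fun t _ => hI t)).symm
    _ ≤ 1 := by
        apply Real.circleAverage_mono_on_of_le_circle
        · exact CircleIntegrable.fun_sum _ (fun t _ => hI t)
        · intro z hz
          have hz1 : ‖z‖ = 1 := by simpa using hz
          simp only [hrw]
          apply h
          simp [hz1, abs_of_pos hr0, hr1]

lemma oneSum_one_var_fin {ι : Type} [Fintype ι] (d : ℕ) (a : ι → Fin d → ℂ)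
    (h : ∀ z : ℂ, ‖z‖ < 1 → ∑ t, ‖∑ j, a t j * z ^ (j:ℕ)‖ ≤ 1) :
    ∑ t, Real.sqrt (∑ k : Fin d, (1/2:ℝ)^(k:ℕ) * ‖a t k‖^2) ≤ 1 := by
  have := oneSum_one_var_family d (fun t j => if hj : j < d then a t ⟨j, hj⟩ else 0)
    (by simpa [Finset.sum_range] using h)
  simpa [Finset.sum_range] using this

lemma oneSum_sum_cons {M : Type*} [AddCommMonoid M] {n d : ℕ} (f : (Fin (n+1) → Fin d) → M) :
    ∑ α, f α = ∑ k : Fin d, ∑ β : Fin n → Fin d, f (Fin.cons k β : Fin (n+1) → Fin d) := by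
  rw [← (Fin.consEquiv (fun _ : Fin (n+1) => Fin d)).sum_comp, Fintype.sum_prod_type]
  rfl

lemma oneSum_many (d n : ℕ) : ∀ (ι : Type) [Fintype ι] (a : ι → (Fin n → Fin d) → ℂ),
    (∀ z : Fin n → ℂ, (∀ i, ‖z i‖ < 1) → ∑ t, ‖∑ α, a t α * ∏ i, z i ^ (α i : ℕ)‖ ≤ 1) →
    ∑ t, Real.sqrt (∑ α, (1/2:ℝ)^(∑ i, (α i : ℕ)) * ‖a t α‖^2) ≤ 1 := by
  induction n with
  | zero =>
    intro ι _ a h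
    simpa using h 0 (by simp)
  | succ n ih =>
    intro ι _ a h
    set P : ι → Fin d → (Fin n → ℂ) → ℂ := fun t k w =>
      ∑ β : Fin n → Fin d, a t (Fin.cons k β : Fin (n+1) → Fin d) * ∏ i, w i ^ (β i : ℕ) with hP
    set B : ι → Fin d → ℝ := fun t k => Real.sqrt (∑ β : Fin n → Fin d,
      (1/2:ℝ)^(∑ i, (β i : ℕ)) * ‖a t (Fin.cons k β : Fin (n+1) → Fin d)‖^2) with hB
    set S : ι → ℝ := fun t => Real.sqrt (∑ k : Fin d, (1/2:ℝ)^(k:ℕ) * (B t k)^2) with hS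
    set s : ℕ → ℝ := fun k => Real.sqrt ((1/2:ℝ)^k) with hs
    have hs2 : ∀ k, s k ^ 2 = (1/2:ℝ)^k := fun k => Real.sq_sqrt (by positivity)
    have hs0 : ∀ k, 0 ≤ s k := fun k => Real.sqrt_nonneg _
    have hB0 : ∀ t k, 0 ≤ B t k := fun t k => Real.sqrt_nonneg _
    have hS0 : ∀ t, 0 ≤ S t := fun t => Real.sqrt_nonneg _
    have hB2 : ∀ t k, B t k ^ 2 = ∑ β : Fin n → Fin d,
      (1/2:ℝ)^(∑ i, (β i : ℕ)) * ‖a t (Fin.cons k β : Fin (n+1) → Fin d)‖^2 :=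
      fun t k => Real.sq_sqrt (Finset.sum_nonneg (fun _ _ => by positivity))
    have hS2 : ∀ t, S t ^ 2 = ∑ k : Fin d, (1/2:ℝ)^(k:ℕ) * (B t k)^2 :=
      fun t => Real.sq_sqrt (Finset.sum_nonneg (fun _ _ => by positivity))
    have hgoal : ∀ t, Real.sqrt (∑ α : Fin (n+1) → Fin d,
        (1/2:ℝ)^(∑ i, (α i : ℕ)) * ‖a t α‖^2) = S t := by
      intro t
      rw [hS]
      simp only [hB2]
      rw [oneSum_sum_cons]
      congr 1
      apply Finset.sum_congr rfl
      intro k _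
      rw [Finset.mul_sum]
      apply Finset.sum_congr rfl
      intro β _
      rw [Fin.sum_univ_succ]
      simp only [Fin.cons_zero, Fin.cons_succ]
      rw [pow_add]; ring
    simp only [hgoal]
    -- one-variable step
    have h1 : ∀ w : Fin n → ℂ, (∀ i, ‖w i‖ < 1) →
        ∑ t, Real.sqrt (∑ k : Fin d, (1/2:ℝ)^(k:ℕ) * ‖P t k w‖^2) ≤ 1 := by
      intro w hw
      apply oneSum_one_var_fin d (fun t k => P t k w)
      intro z hz
      have := h (Fin.cons z w : Fin (n+1) → ℂ) (by
        intro i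
        refine Fin.cases ?_ ?_ i
        · simpa using hz
        · intro j; simpa using hw j)
      refine le_trans (le_of_eq ?_) this
      apply Finset.sum_congr rfl
      intro t _
      rw [oneSum_sum_cons]
      congr 1
      apply Finset.sum_congr rfl
      intro k _
      rw [hP, Finset.sum_mul]
      apply Finset.sum_congr rfl
      intro β _
      rw [Fin.prod_univ_succ]
      simp only [Fin.cons_zero, Fin.cons_succ]
      ring
    set u : ι → Fin d → ℝ := fun t k => s k * B t k / S t with hu
    have hu0 : ∀ t k, 0 ≤ u t k := fun t k => div_nonneg (mul_nonneg (hs0 _) (hB0 _ _)) (hS0 _)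
    have hu1 : ∀ t, ∑ k, u t k ^ 2 ≤ 1 := by
      intro t
      have : ∑ k, u t k ^ 2 = S t ^ 2 / S t ^ 2 := by
        rw [hu]
        rw [hS2, Finset.sum_div]
        apply Finset.sum_congr rfl
        intro k _
        rw [div_pow, mul_pow, hs2, ← hS2]
      rw [this]
      exact div_self_le_one _
    have h2 := ih (ι × Fin d) (fun x β => ((u x.1 x.2 * s x.2 : ℝ) : ℂ) *
      a x.1 (Fin.cons x.2 β : Fin (n+1) → Fin d)) (by
        intro w hw
        refine le_trans ?_ (h1 w hw)
        rw [Fintype.sum_prod_type]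
        apply Finset.sum_le_sum
        intro t _
        have e : ∀ k : Fin d, ‖∑ β : Fin n → Fin d, ((u t k * s k : ℝ) : ℂ) *
            a t (Fin.cons k β : Fin (n+1) → Fin d) * ∏ i, w i ^ (β i : ℕ)‖
            = u t k * (s k * ‖P t k w‖) := by
          intro k
          simp only [mul_assoc]
          rw [← Finset.mul_sum, norm_mul, Complex.norm_real, Real.norm_of_nonneg
            (mul_nonneg (hu0 _ _) (hs0 _)), mul_assoc]
        simp only [e]
        calc _ ≤ Real.sqrt (∑ k, u t k ^ 2) * Real.sqrt (∑ k : Fin d, (s k * ‖P t k w‖)^2) :=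
              Real.sum_mul_le_sqrt_mul_sqrt _ _ _
          _ ≤ 1 * Real.sqrt (∑ k : Fin d, (s k * ‖P t k w‖)^2) := by
              gcongr
              exact Real.sqrt_le_one.2 (hu1 t)
          _ = _ := by
              rw [one_mul]
              simp only [mul_pow, hs2])
    refine le_trans (le_of_eq ?_) h2
    rw [Fintype.sum_prod_type]
    apply Finset.sum_congr rfl
    intro t _
    have e : ∀ k : Fin d, Real.sqrt (∑ β : Fin n → Fin d, (1/2:ℝ)^(∑ i, (β i : ℕ)) *
        ‖((u t k * s k : ℝ) : ℂ) * a t (Fin.cons k β : Fin (n+1) → Fin d)‖^2)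
        = u t k * s k * B t k := by
      intro k
      have hus := mul_nonneg (hu0 t k) (hs0 k)
      rw [← Real.sqrt_sq (mul_nonneg hus (hB0 t k)), mul_pow, hB2, Finset.mul_sum]
      congr 1
      apply Finset.sum_congr rfl
      intro β _
      rw [norm_mul, Complex.norm_real, Real.norm_of_nonneg hus]; ring
    simp only [e]
    have : ∑ k : Fin d, u t k * s k * B t k = S t ^ 2 / S t := by
      rw [hS2, Finset.sum_div]
      apply Finset.sum_congr rfl
      intro k _
      rw [hu, ← hs2]; ring
    rw [this, sq, mul_self_div_self]

lemma oneSum_sum_abs {N : ℕ} (c : Fin N → ℂ)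
    (h : ∀ lam : Fin N → ℂ, (∀ t, ‖lam t‖ ≤ 1) → ‖∑ t, lam t * c t‖ ≤ 1) : ∑ t, ‖c t‖ ≤ 1 := by
  have h1 := h (fun t => starRingEnd ℂ (c t) / ‖c t‖) (by
    intro t
    rw [norm_div, Complex.norm_conj, Complex.norm_real, norm_norm]
    exact div_self_le_one _)
  have : ∑ t, starRingEnd ℂ (c t) / ‖c t‖ * c t = ((∑ t, ‖c t‖ : ℝ) : ℂ) := by
    push_cast
    apply Finset.sum_congr rfl
    intro t _
    rw [div_mul_eq_mul_div, Complex.conj_mul', sq, mul_self_div_self]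
  rw [this, Complex.norm_real, Real.norm_of_nonneg (Finset.sum_nonneg (fun _ _ => norm_nonneg _))]
    at h1
  exact h1

lemma oneSum_antidiag {M : Type*} [AddCommMonoid M] (n m : ℕ) (f : (Fin n → ℕ) → M) :
    ∑ α ∈ Finset.Nat.antidiagonalTuple n m, f α
      = ∑ α : Fin n → Fin (m+1), if ∑ i, (α i : ℕ) = m then f (fun i => α i) else 0 := by
  rw [← Finset.sum_filter]
  symm
  apply Finset.sum_bij (fun α _ => fun i => (α i : ℕ))
  · intro α hα
    rw [Finset.Nat.mem_antidiagonalTuple]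
    simpa using hα
  · intro α _ β _ hab
    funext i
    exact Fin.ext (congrFun hab i)
  · intro α hα
    rw [Finset.Nat.mem_antidiagonalTuple] at hα
    refine ⟨fun i => ⟨α i, ?_⟩, ?_, ?_⟩
    · have := Finset.single_le_sum (f := α) (fun _ _ => Nat.zero_le _) (Finset.mem_univ i)
      omega
    · simpa using hα
    · rfl
  · intro _ _; rfl

theorem one_summing_norm_coefficient_map (m n : ℕ) (hm : 0 < m) (hn : 0 < n) (N : ℕ)
    (a : Fin N → (Fin n → ℕ) → ℂ)
    (h : ∀ lam : Fin N → ℂ, (∀ t, ‖lam t‖ ≤ 1) →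
      ∀ z : Fin n → ℂ, (∀ i, ‖z i‖ < 1) →
        ‖∑ t, lam t * mhEval n m (a t) z‖ ≤ 1) :
    ∑ t, Real.sqrt (∑ α ∈ Finset.Nat.antidiagonalTuple n m, ‖a t α‖ ^ 2)
      ≤ Real.sqrt 2 ^ m := by
  have key := oneSum_many (m+1) n (Fin N)
    (fun t α => if ∑ i, (α i : ℕ) = m then a t (fun i => α i) else 0) (by
      intro z hz
      have h1 := oneSum_sum_abs (fun t => mhEval n m (a t) z) (fun lam hl => h lam hl z hz)
      simp only [mhEval, oneSum_antidiag] at h1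
      simpa only [ite_mul, zero_mul] using h1)
  have e : ∀ t, Real.sqrt (∑ α ∈ Finset.Nat.antidiagonalTuple n m, ‖a t α‖ ^ 2)
      = Real.sqrt 2 ^ m * Real.sqrt (∑ α : Fin n → Fin (m+1), (1/2:ℝ)^(∑ i, (α i : ℕ)) *
        ‖(if ∑ i, (α i : ℕ) = m then a t (fun i => α i) else 0 : ℂ)‖^2) := by
    intro t
    have : ∑ α ∈ Finset.Nat.antidiagonalTuple n m, ‖a t α‖ ^ 2
        = 2 ^ m * ∑ α : Fin n → Fin (m+1), (1/2:ℝ)^(∑ i, (α i : ℕ)) *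
        ‖(if ∑ i, (α i : ℕ) = m then a t (fun i => α i) else 0 : ℂ)‖^2 := by
      rw [oneSum_antidiag, Finset.mul_sum]
      apply Finset.sum_congr rfl
      intro α _
      split_ifs with hα
      · rw [hα, ← mul_assoc, ← mul_pow]; norm_num
      · simp
    rw [this, Real.sqrt_mul (by positivity)]
    congr 1
    rw [Real.sqrt_eq_iff_mul_self_eq (by positivity) (by positivity), ← mul_pow,
      Real.mul_self_sqrt (by norm_num)]
  simp only [e]
  rw [← Finset.mul_sum]
  exact mul_le_of_le_one_right (by positivity) key
end

section
/- For every polynomial ∑_{ν=0}^m a_ν z^ν in one complex variable with complex coefficients, one has ‖∑_{ν=0}^m 2^{-ν/2} a_ν z^ν‖_{L²(μ)} ≤ ‖∑_{ν=0}^m a_ν z^ν‖_{L¹(μ)}, i.e. (∑_{ν=0}^m 2^{-ν} |a_ν|²)^{1/2} ≤ ∫_{𝕋} |∑_{ν=0}^m a_ν z^ν| dμ(z). (Bonami's one-variable hypercontractivity inequality.) -/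
open Finset

lemma bon_e_norm (θ : ℝ) : ‖Complex.exp (2 * Real.pi * Complex.I * θ)‖ = 1 := by
  rw [show (2 * Real.pi * Complex.I * θ : ℂ) = ((2 * Real.pi * θ : ℝ) : ℂ) * Complex.I by
    push_cast; ring]
  exact Complex.norm_exp_ofReal_mul_I _

lemma bon_cont {g : ℂ → ℂ} (hg : DiffContOnCl ℂ g (Metric.ball 0 1)) :
    Continuous (fun θ : ℝ => g (Complex.exp (2 * Real.pi * Complex.I * θ))) := by
  have h := hg.continuousOn_ball
  exact h.comp_continuous (by fun_prop) (fun x => by simp [bon_e_norm])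

lemma bon_coeff {g : ℂ → ℂ} (hg : DiffContOnCl ℂ g (Metric.ball 0 1)) (k : ℕ) :
    fourierCoeffOn (zero_lt_one : (0:ℝ) < 1)
      (fun θ : ℝ => g (Complex.exp (2 * Real.pi * Complex.I * θ))) k
      = iteratedDeriv k g 0 / (k.factorial : ℂ) := by
  rw [fourierCoeffOn_eq_integral]
  have h := hg.circleIntegral_one_div_sub_center_pow_smul zero_lt_one k
  rw [circleIntegral] at h
  have h2 := intervalIntegral.integral_comp_mul_left (a := 0) (b := 1) (c := 2 * Real.pi)
    (fun t => deriv (circleMap 0 1) t • (1 / (circleMap 0 1 t - 0) ^ (k + 1)) • g (circleMap 0 1 t))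
    (by positivity)
  rw [mul_zero, mul_one, h] at h2
  have hk : (k.factorial : ℂ) ≠ 0 := by exact_mod_cast k.factorial_ne_zero
  have hpi : (Real.pi : ℂ) ≠ 0 := by exact_mod_cast Real.pi_ne_zero
  have h3 : ∀ x : ℝ, deriv (circleMap 0 1) (2 * Real.pi * x) • (1 / (circleMap 0 1 (2 * Real.pi * x) - 0) ^ (k + 1)) • g (circleMap 0 1 (2 * Real.pi * x))
     = Complex.I * (fourier (-(k:ℤ)) (x : AddCircle ((1:ℝ) - 0)) • g (Complex.exp (2 * Real.pi * Complex.I * x))) := by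
    intro x
    have e1 : circleMap 0 1 (2 * Real.pi * x) = Complex.exp (2 * Real.pi * Complex.I * x) := by
      simp only [circleMap]; push_cast; rw [zero_add, one_mul]; congr 1; ring
    have e2 : fourier (-(k:ℤ)) (x : AddCircle ((1:ℝ) - 0)) = ((Complex.exp (2 * Real.pi * Complex.I * x))^k)⁻¹ := by
      rw [fourier_coe_apply, ← Complex.exp_nat_mul, ← Complex.exp_neg]
      congr 1; push_cast; ring
    rw [deriv_circleMap, e1, e2]
    have := Complex.exp_ne_zero (2 * Real.pi * Complex.I * x)
    simp only [smul_eq_mul, sub_zero]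
    field_simp
    ring
  simp_rw [h3] at h2
  rw [intervalIntegral.integral_const_mul] at h2
  have : Complex.I ≠ 0 := Complex.I_ne_zero
  apply mul_left_cancel₀ this
  simp only [sub_zero, div_one, one_smul] at h2 ⊢
  rw [h2]
  simp only [Complex.real_smul, smul_eq_mul]
  push_cast
  field_simp

lemma bon_bessel {g : ℂ → ℂ} (hg : DiffContOnCl ℂ g (Metric.ball 0 1)) (N : ℕ) :
    ∑ k ∈ range N, ‖iteratedDeriv k g 0 / (k.factorial : ℂ)‖ ^ 2 ≤
      ∫ θ in Set.Ioc (0 : ℝ) 1, ‖g (Complex.exp (2 * Real.pi * Complex.I * θ))‖ ^ 2 := by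
  have hc := bon_cont hg
  have hm : MeasureTheory.MemLp (fun θ : ℝ => g (Complex.exp (2 * Real.pi * Complex.I * θ))) 2
      (MeasureTheory.volume.restrict (Set.Ioc 0 1)) := by
    rw [MeasureTheory.memLp_two_iff_integrable_sq_norm hc.aestronglyMeasurable]
    exact ((hc.norm.pow 2).integrableOn_Icc (a := 0) (b := 1)).mono_set Set.Ioc_subset_Icc_self
  have h := hasSum_sq_fourierCoeffOn (zero_lt_one : (0:ℝ) < 1) hm
  have h' := sum_le_hasSum ((range N).map ⟨((↑) : ℕ → ℤ), Nat.cast_injective⟩)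
    (fun i _ => by positivity) h
  rw [intervalIntegral.integral_of_le zero_le_one] at h'
  simp only [sum_map, Function.Embedding.coeFn_mk, bon_coeff hg] at h'
  simpa using h'

/-- factorization property -/
def BonFac (f : ℂ → ℂ) : Prop := ∃ g h : ℂ → ℂ, DiffContOnCl ℂ g (Metric.ball 0 1) ∧
  DiffContOnCl ℂ h (Metric.ball 0 1) ∧ (∀ z, ‖z‖ ≤ 1 → f z = g z * h z) ∧
  ∀ z, ‖z‖ = 1 → ‖g z‖ = ‖h z‖

lemma BonFac.mul {f₁ f₂ : ℂ → ℂ} (h₁ : BonFac f₁) (h₂ : BonFac f₂) :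
    BonFac (fun z => f₁ z * f₂ z) := by
  obtain ⟨g, h, hg, hh, e, n⟩ := h₁
  obtain ⟨g', h', hg', hh', e', n'⟩ := h₂
  refine ⟨fun z => g z * g' z, fun z => h z * h' z, ?_, ?_, ?_, ?_⟩
  · exact hg.smul hg'
  · exact hh.smul hh'
  · intro z hz; simp only [e z hz, e' z hz]; ring
  · intro z hz; simp only [norm_mul, n z hz, n' z hz]

lemma bon_const (c : ℂ) : BonFac (fun _ => c) := by
  obtain ⟨d, hd⟩ := IsAlgClosed.exists_pow_nat_eq c (n := 2) (by norm_num)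
  exact ⟨fun _ => d, fun _ => d, diffContOnCl_const, diffContOnCl_const,
    fun z _ => by rw [← hd]; ring, fun _ _ => rfl⟩

lemma bon_sqrt {w : ℂ} (hw : ‖w‖ ≤ 1) : ∃ g : ℂ → ℂ, DiffContOnCl ℂ g (Metric.ball 0 1) ∧
    ∀ z, g z ^ 2 = 1 - w * z := by
  have hre : ∀ z : ℂ, 1 - ‖z‖ ≤ (1 - w * z).re := by
    intro z
    have h1 := Complex.re_le_norm (w * z)
    rw [norm_mul] at h1
    have : ‖w‖ * ‖z‖ ≤ ‖z‖ := by nlinarith [norm_nonneg z]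
    simp only [Complex.sub_re, Complex.one_re]
    linarith
  refine ⟨fun z => (1 - w * z) ^ ((1/2 : ℂ)), ⟨?_, ?_⟩, ?_⟩
  · intro z hz
    apply DifferentiableAt.differentiableWithinAt
    apply DifferentiableAt.cpow_const (by fun_prop)
    left
    have := hre z
    simp at hz
    linarith
  · rw [closure_ball _ one_ne_zero]
    intro z hz
    apply ContinuousAt.continuousWithinAt
    have h := Complex.continuousAt_cpow_const_of_re_pos (z := 1 - w * z) (w := 1/2)
      (Or.inl (by have := hre z; simp at hz; linarith)) (by norm_num)
    exact ContinuousAt.comp (f := fun z => 1 - w * z) h (by fun_prop)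
  · intro z
    simp

lemma bon_lin (a : ℂ) : BonFac (fun z => z - a) := by
  rcases le_or_gt 1 ‖a‖ with ha | ha
  · have ha0 : a ≠ 0 := by rintro rfl; simp at ha; linarith
    have : BonFac (fun z => 1 - a⁻¹ * z) := by
      obtain ⟨g, hg, e⟩ := bon_sqrt (w := a⁻¹) (by rw [norm_inv]; exact inv_le_one_of_one_le₀ ha)
      exact ⟨g, g, hg, hg, fun z _ => by linear_combination -(e z), fun _ _ => rfl⟩
    convert (bon_const (-a)).mul this using 2
    field_simp
    ring
  · obtain ⟨g, hg, e⟩ := bon_sqrt (w := starRingEnd ℂ a) (by simpa using ha.le)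
    have hne : ∀ z, ‖z‖ ≤ 1 → g z ≠ 0 := by
      intro z hz h0
      have h1 := e z
      rw [h0] at h1
      have h2 : starRingEnd ℂ a * z = 1 := by linear_combination h1
      have h3 := congrArg norm h2
      rw [norm_mul, RCLike.norm_conj, norm_one] at h3
      nlinarith [norm_nonneg a, norm_nonneg z]
    refine ⟨g, fun z => (g z)⁻¹ * (z - a), hg, ?_, ?_, ?_⟩
    · refine DiffContOnCl.smul (hg.inv ?_) ?_
      · intro z hz
        rw [closure_ball _ one_ne_zero] at hz
        exact hne z (by simpa using hz)
      · exact (Differentiable.diffContOnCl (by fun_prop))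
    · intro z hz
      have := hne z hz
      field_simp
    · intro z hz
      have h0 := hne z hz.le
      have h1 : ‖z - a‖ = ‖1 - starRingEnd ℂ a * z‖ := by
        have hz2 : z * starRingEnd ℂ z = 1 := by
          rw [Complex.mul_conj, Complex.normSq_eq_norm_sq, hz]; simp
        have : 1 - starRingEnd ℂ a * z = z * starRingEnd ℂ (z - a) := by
          rw [map_sub]; linear_combination -hz2
        rw [this, norm_mul, RCLike.norm_conj, hz, one_mul]
      rw [norm_mul, norm_inv, h1, ← e, norm_pow]
      have := norm_ne_zero_iff.mpr h0
      field_simp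

lemma bon_poly (P : Polynomial ℂ) : BonFac (fun z => P.eval z) := by
  have h := (IsAlgClosed.splits P).eq_prod_roots
  have key : ∀ s : Multiset ℂ, BonFac (fun z => ((s.map fun a => Polynomial.X - Polynomial.C a).prod).eval z) := by
    intro s
    induction s using Multiset.induction_on with
    | empty => simpa using bon_const 1
    | cons a s ih => simpa using (bon_lin a).mul ih
  rw [h]
  simpa only [Polynomial.eval_mul, Polynomial.eval_C] using (bon_const P.leadingCoeff).mul (key P.roots)

lemma bon_iter (P : Polynomial ℂ) (n : ℕ) :
    iteratedDeriv n (fun z => P.eval z) 0 / (n.factorial : ℂ) = P.coeff n := by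
  have h : ∀ n, deriv^[n] (fun z => P.eval z) = fun z => (Polynomial.derivative^[n] P).eval z := by
    intro n
    induction n with
    | zero => rfl
    | succ n ih =>
      rw [Function.iterate_succ_apply', ih, Function.iterate_succ_apply']
      ext z; simp
  rw [iteratedDeriv_eq_iterate, h]
  have hk : (n.factorial : ℂ) ≠ 0 := by exact_mod_cast n.factorial_ne_zero
  simp only [← Polynomial.coeff_zero_eq_eval_zero, Polynomial.coeff_iterate_derivative]
  rw [zero_add, Nat.descFactorial_self, nsmul_eq_mul]
  field_simp

lemma bon_conv {f g h : ℂ → ℂ} (hg : DiffContOnCl ℂ g (Metric.ball 0 1))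
    (hh : DiffContOnCl ℂ h (Metric.ball 0 1)) (e : ∀ z, ‖z‖ ≤ 1 → f z = g z * h z) (n : ℕ) :
    iteratedDeriv n f 0 / (n.factorial : ℂ) = ∑ i ∈ range (n + 1),
      (iteratedDeriv i g 0 / (i.factorial : ℂ)) *
      (iteratedDeriv (n - i) h 0 / ((n - i).factorial : ℂ)) := by
  have hb : Metric.ball (0:ℂ) 1 ∈ nhds 0 := Metric.ball_mem_nhds _ one_pos
  have he : f =ᶠ[nhds 0] (g * h) := by
    filter_upwards [hb] with z hz
    exact e z (by simp at hz; exact hz.le)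
  rw [he.iteratedDeriv_eq, iteratedDeriv_mul
    (hg.differentiableOn.analyticAt hb).contDiffAt (hh.differentiableOn.analyticAt hb).contDiffAt,
    sum_div]
  refine sum_congr rfl fun i hi => ?_
  have hi' : i ≤ n := by simp at hi; omega
  rw [Nat.cast_choose ℂ hi']
  have h1 : (n.factorial : ℂ) ≠ 0 := by exact_mod_cast n.factorial_ne_zero
  have h2 : (i.factorial : ℂ) ≠ 0 := by exact_mod_cast i.factorial_ne_zero
  have h3 : ((n-i).factorial : ℂ) ≠ 0 := by exact_mod_cast (n-i).factorial_ne_zero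
  field_simp

lemma bon_sum (m : ℕ) (c u v : ℕ → ℂ) (h : ∀ n, c n = ∑ i ∈ range (n + 1), u i * v (n - i)) :
    ∑ n ∈ range (m + 1), (2 : ℝ) ^ (-(n : ℝ)) * ‖c n‖ ^ 2 ≤
      (∑ n ∈ range (m + 1), ‖u n‖ ^ 2) * ∑ n ∈ range (m + 1), ‖v n‖ ^ 2 := by
  have h1 : ∀ n : ℕ, (2 : ℝ) ^ (-(n : ℝ)) * ‖c n‖ ^ 2 ≤
      ∑ i ∈ range (n + 1), ‖u i‖ ^ 2 * ‖v (n - i)‖ ^ 2 := by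
    intro n
    have a1 : ‖c n‖ ^ 2 ≤ (n + 1 : ℝ) * ∑ i ∈ range (n + 1), ‖u i‖ ^ 2 * ‖v (n - i)‖ ^ 2 := by
      have : ‖c n‖ ≤ ∑ i ∈ range (n + 1), ‖u i‖ * ‖v (n - i)‖ := by
        rw [h]; refine (norm_sum_le _ _).trans (le_of_eq ?_)
        simp
      calc ‖c n‖ ^ 2 ≤ (∑ i ∈ range (n + 1), ‖u i‖ * ‖v (n - i)‖) ^ 2 := by gcongr
        _ ≤ _ := sq_sum_le_card_mul_sum_sq
        _ = _ := by simp [mul_pow]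
    have a2 : (n + 1 : ℝ) ≤ 2 ^ n := by exact_mod_cast Nat.lt_two_pow_self
    have a3 : 0 ≤ ∑ i ∈ range (n + 1), ‖u i‖ ^ 2 * ‖v (n - i)‖ ^ 2 := by positivity
    rw [Real.rpow_neg (by norm_num), Real.rpow_natCast, inv_mul_le_iff₀ (by positivity)]
    exact a1.trans (by gcongr)
  calc _ ≤ ∑ n ∈ range (m + 1), ∑ i ∈ range (n + 1), ‖u i‖ ^ 2 * ‖v (n - i)‖ ^ 2 :=
        sum_le_sum fun n _ => h1 n
    _ = ∑ n ∈ range (m + 1), ∑ p ∈ antidiagonal n, ‖u p.1‖ ^ 2 * ‖v p.2‖ ^ 2 := by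
        refine sum_congr rfl fun n _ => ?_
        rw [Nat.sum_antidiagonal_eq_sum_range_succ_mk]
    _ = ∑ p ∈ (range (m+1)).sigma (fun n => antidiagonal n), ‖u p.2.1‖ ^ 2 * ‖v p.2.2‖ ^ 2 := by
        rw [sum_sigma]
    _ = ∑ p ∈ ((range (m+1)).sigma (fun n => antidiagonal n)).image (fun p => p.2),
          ‖u p.1‖ ^ 2 * ‖v p.2‖ ^ 2 := by
        rw [sum_image]
        rintro ⟨n, p⟩ hp ⟨n', p'⟩ hp' hpp
        simp at hp hp' hpp
        subst hpp
        obtain rfl : n = n' := by omega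
        rfl
    _ ≤ ∑ p ∈ range (m+1) ×ˢ range (m+1), ‖u p.1‖ ^ 2 * ‖v p.2‖ ^ 2 := by
        apply sum_le_sum_of_subset_of_nonneg
        · rintro ⟨i, j⟩ hp
          simp at hp ⊢
          omega
        · intros; positivity
    _ = _ := by rw [sum_mul_sum, sum_product]

/-- Bonami's one-variable hypercontractivity inequality: for every polynomial
`∑_{ν=0}^m a_ν z^ν` in one complex variable,
`(∑ 2^{-ν} |a_ν|²)^{1/2} ≤ ∫_𝕋 |∑ a_ν z^ν| dμ(z)`, where `μ` is the normalized
Haar measure on the circle (parametrized by `z = e^{2πiθ}`, `θ ∈ (0,1]`). -/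
theorem bonami_one_variable (m : ℕ) (a : ℕ → ℂ) :
    Real.sqrt (∑ ν ∈ Finset.range (m + 1), (2 : ℝ) ^ (-(ν : ℝ)) * ‖a ν‖ ^ 2)
      ≤ ∫ θ in Set.Ioc (0 : ℝ) 1,
          ‖∑ ν ∈ Finset.range (m + 1),
            a ν * Complex.exp (2 * Real.pi * Complex.I * θ) ^ ν‖ := by
  set P : Polynomial ℂ := ∑ ν ∈ range (m + 1), Polynomial.C (a ν) * Polynomial.X ^ ν with hP
  have hPe : ∀ z, P.eval z = ∑ ν ∈ range (m + 1), a ν * z ^ ν := by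
    intro z; simp [hP, Polynomial.eval_finsetSum]
  have hPc : ∀ n ∈ range (m + 1), P.coeff n = a n := by
    intro n hn
    simp only [hP, Polynomial.finsetSum_coeff, Polynomial.coeff_C_mul_X_pow]
    rw [sum_ite_eq, if_pos hn]
  obtain ⟨g, h, hg, hh, e, hn⟩ := bon_poly P
  have hL : ∑ ν ∈ range (m + 1), (2 : ℝ) ^ (-(ν : ℝ)) * ‖a ν‖ ^ 2
      = ∑ ν ∈ range (m + 1), (2 : ℝ) ^ (-(ν : ℝ)) * ‖P.coeff ν‖ ^ 2 :=
    sum_congr rfl fun n hn => by rw [hPc n hn]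
  have hs := bon_sum m P.coeff
    (fun i => iteratedDeriv i g 0 / (i.factorial : ℂ))
    (fun i => iteratedDeriv i h 0 / (i.factorial : ℂ)) (fun n => (bon_iter P n).symm.trans (bon_conv hg hh e n))
  have I1 : ∀ θ : ℝ, ‖∑ ν ∈ range (m + 1), a ν * Complex.exp (2 * Real.pi * Complex.I * θ) ^ ν‖
      = ‖g (Complex.exp (2 * Real.pi * Complex.I * θ))‖ ^ 2 := by
    intro θ
    have e' := e _ (bon_e_norm θ).le
    simp only at e'
    rw [← hPe, e', norm_mul, ← hn _ (bon_e_norm θ), sq]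
  have I2 : ∀ θ : ℝ, ‖h (Complex.exp (2 * Real.pi * Complex.I * θ))‖ ^ 2
      = ‖g (Complex.exp (2 * Real.pi * Complex.I * θ))‖ ^ 2 := by
    intro θ
    rw [← hn _ (bon_e_norm θ)]
  have b1 := bon_bessel hg (m + 1)
  have b2 := bon_bessel hh (m + 1)
  simp_rw [I2] at b2
  simp_rw [I1]
  rw [hL]
  apply Real.sqrt_le_iff.mpr
  have hpos : 0 ≤ ∫ θ in Set.Ioc (0 : ℝ) 1, ‖g (Complex.exp (2 * Real.pi * Complex.I * θ))‖ ^ 2 :=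
    MeasureTheory.integral_nonneg fun _ => by positivity
  refine ⟨hpos, hs.trans ?_⟩
  rw [sq]
  exact mul_le_mul b1 b2 (by positivity) hpos
end

section
/- For all positive integers m, n and every family (c_i)_{i ∈ M(m,n)} of complex numbers, one has (∑_{i ∈ M(m,n)} |c_i|^{2m/(m+1)})^{(m+1)/(2m)} ≤ ∏_{k=1}^m [ ∑_{i_k=1}^n ( ∑_{i^k ∈ M(m-1,n)} |c_i|² )^{1/2} ]^{1/m}. (Blei's mixed-norm inequality.) -/
open Finset

lemma blei_sum_aux {m n : ℕ} (c : (Fin m → Fin n) → ℝ) (S : Fin n → ℝ) (k : Fin m)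
    (hS : ∀ v, S v = Real.sqrt
      (∑ i ∈ Finset.univ.filter (fun i : Fin m → Fin n => i k = v), c i ^ 2)) :
    ∑ i, c i ^ 2 / (S (i k) * ∑ v, S v) ≤ 1 := by
  have h : ∑ i, c i ^ 2 / (S (i k) * ∑ v, S v) = (∑ v, S v) / ∑ v, S v := by
    rw [← Finset.sum_fiberwise (s := Finset.univ) (g := fun i : Fin m → Fin n => i k),
      Finset.sum_div]
    refine Finset.sum_congr rfl fun v _ => ?_
    have h1 : ∀ i ∈ Finset.univ.filter (fun i : Fin m → Fin n => i k = v),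
        c i ^ 2 / (S (i k) * ∑ v, S v) = c i ^ 2 / (S v * ∑ v, S v) := by
      intro i hi
      rw [(Finset.mem_filter.1 hi).2]
    rw [Finset.sum_congr rfl h1, ← Finset.sum_div]
    have h2 : ∑ i ∈ Finset.univ.filter (fun i : Fin m → Fin n => i k = v), c i ^ 2
        = S v * S v := by
      rw [hS, Real.mul_self_sqrt]
      exact Finset.sum_nonneg fun i _ => sq_nonneg _
    rw [h2]
    by_cases h0 : S v = 0
    · simp [h0]
    · rw [mul_div_mul_left _ _ h0]
  rw [h]
  exact div_self_le_one _

lemma blei_amgm {m : ℕ} (x W P : ℝ) (s a : Fin m → ℝ) (hx : 0 < x)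
    (hs : ∀ k, 0 < s k) (ha : ∀ k, 0 < a k) (hW : W = ∏ k, s k) (hP : P = ∏ k, a k) :
    x ^ ((2 * (m : ℝ)) / ((m : ℝ) + 1)) ≤
      P ^ ((2 : ℝ) / ((m : ℝ) + 1)) * ((W / P + ∑ k, x ^ 2 / (s k * a k)) / ((m : ℝ) + 1)) := by
  have hm1 : (0 : ℝ) < (m : ℝ) + 1 := by positivity
  have hPpos : 0 < P := hP ▸ Finset.prod_pos fun k _ => ha k
  have hWpos : 0 < W := hW ▸ Finset.prod_pos fun k _ => hs k
  let z : Option (Fin m) → ℝ := fun o => o.elim (W / P) (fun k => x ^ 2 / (s k * a k))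
  have hz : ∀ o, 0 ≤ z o := by
    rintro (_ | k)
    · exact (div_pos hWpos hPpos).le
    · exact (div_pos (pow_pos hx 2) (mul_pos (hs k) (ha k))).le
  have key := Real.geom_mean_le_arith_mean_weighted Finset.univ
    (fun _ : Option (Fin m) => 1 / ((m : ℝ) + 1)) z (fun _ _ => by positivity)
    (by simp; field_simp) (fun o _ => hz o)
  rw [Real.finset_prod_rpow _ _ (fun o _ => hz o), ← Finset.mul_sum] at key
  have hprod : ∏ o, z o = (x ^ 2) ^ m / P ^ 2 := by
    rw [Fintype.prod_option]
    simp only [z, Option.elim]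
    rw [Finset.prod_div_distrib, Finset.prod_mul_distrib, ← hW, ← hP]
    simp
    field_simp
  have hsum : ∑ o, z o = W / P + ∑ k, x ^ 2 / (s k * a k) := by
    rw [Fintype.sum_option]
    rfl
  rw [hprod, hsum] at key
  have e1 : x ^ ((2 * (m : ℝ)) / ((m : ℝ) + 1)) =
      P ^ ((2 : ℝ) / ((m : ℝ) + 1)) * ((x ^ 2) ^ m / P ^ 2) ^ (1 / ((m : ℝ) + 1)) := by
    rw [Real.div_rpow (by positivity) (by positivity), ← pow_mul,
      ← Real.rpow_natCast x, ← Real.rpow_natCast P, ← Real.rpow_mul hx.le, ← Real.rpow_mul hPpos.le]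
    push_cast
    rw [mul_one_div, mul_one_div, mul_div_cancel₀]
    positivity
  rw [e1]
  refine mul_le_mul_of_nonneg_left (key.trans_eq ?_) (by positivity)
  ring

/-- Blei's mixed-norm inequality: for every family `(c_i)_{i ∈ M(m,n)}` of complex numbers,
`(∑_i |c_i|^{2m/(m+1)})^{(m+1)/(2m)} ≤ ∏_{k=1}^m [∑_{i_k} (∑_{i^k} |c_i|²)^{1/2}]^{1/m}`,
where `M(m,n)` is the set of multi-indices `i = (i₁,…,i_m)` with entries in `{1,…,n}`. -/
theorem blei_inequality (m n : ℕ) (hm : 0 < m) (hn : 0 < n)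
    (c : (Fin m → Fin n) → ℂ) :
    (∑ i : Fin m → Fin n, ‖c i‖ ^ ((2 * (m : ℝ)) / ((m : ℝ) + 1)))
        ^ (((m : ℝ) + 1) / (2 * (m : ℝ)))
      ≤ ∏ k : Fin m,
          (∑ v : Fin n, Real.sqrt
              (∑ i ∈ Finset.univ.filter (fun i : Fin m → Fin n => i k = v), ‖c i‖ ^ 2))
            ^ ((1 : ℝ) / (m : ℝ)) := by
  set S : Fin m → Fin n → ℝ := fun k v => Real.sqrt
    (∑ i ∈ Finset.univ.filter (fun i : Fin m → Fin n => i k = v), ‖c i‖ ^ 2) with hS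
  have hS0 : ∀ k v, 0 ≤ S k v := fun k v => Real.sqrt_nonneg _
  set A : Fin m → ℝ := fun k => ∑ v, S k v with hA
  have hA0 : ∀ k, 0 ≤ A k := fun k => Finset.sum_nonneg fun v _ => hS0 k v
  set P : ℝ := ∏ k, A k with hP
  have hP0 : 0 ≤ P := Finset.prod_nonneg fun k _ => hA0 k
  have hmr : (0 : ℝ) < m := by exact_mod_cast hm
  have hm1 : (0 : ℝ) < (m : ℝ) + 1 := by positivity
  have hpt : ∀ i, ‖c i‖ ^ ((2 * (m : ℝ)) / ((m : ℝ) + 1)) ≤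
      P ^ ((2 : ℝ) / ((m : ℝ) + 1)) *
        (((∏ k, S k (i k)) / P + ∑ k, ‖c i‖ ^ 2 / (S k (i k) * A k)) / ((m : ℝ) + 1)) := by
    intro i
    by_cases hc : c i = 0
    · rw [hc, norm_zero, Real.zero_rpow (by positivity)]
      have h1 : 0 ≤ ∏ k, S k (i k) := Finset.prod_nonneg fun k _ => hS0 _ _
      simp
      positivity
    · have hpos : 0 < ‖c i‖ := norm_pos_iff.2 hc
      have hs : ∀ k, 0 < S k (i k) := by
        intro k
        refine Real.sqrt_pos.2 (lt_of_lt_of_le (pow_pos hpos 2) ?_)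
        exact Finset.single_le_sum (f := fun i => ‖c i‖ ^ 2) (fun j _ => sq_nonneg _)
          (Finset.mem_filter.2 ⟨Finset.mem_univ i, rfl⟩)
      have ha : ∀ k, 0 < A k := fun k => (hs k).trans_le
        (Finset.single_le_sum (f := fun v => S k v) (fun v _ => hS0 k v) (Finset.mem_univ (i k)))
      exact blei_amgm _ _ _ _ _ hpos hs ha rfl rfl
  have hsumW : ∑ i : Fin m → Fin n, (∏ k, S k (i k)) / P ≤ 1 := by
    have : ∑ i : Fin m → Fin n, ∏ k, S k (i k) = P := by
      rw [hP, hA, Finset.prod_univ_sum]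
      simp
    rw [← Finset.sum_div, this]
    exact div_self_le_one _
  have hsumk : ∑ i, ∑ k, ‖c i‖ ^ 2 / (S k (i k) * A k) ≤ m := by
    rw [Finset.sum_comm]
    calc _ ≤ ∑ k : Fin m, (1 : ℝ) := Finset.sum_le_sum fun k _ =>
            blei_sum_aux (fun i => ‖c i‖) (S k) k fun v => rfl
      _ = m := by simp
  have hmain : ∑ i, ‖c i‖ ^ ((2 * (m : ℝ)) / ((m : ℝ) + 1)) ≤ P ^ ((2 : ℝ) / ((m : ℝ) + 1)) := by
    refine (Finset.sum_le_sum fun i _ => hpt i).trans ?_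
    rw [← Finset.mul_sum, ← Finset.sum_div, Finset.sum_add_distrib]
    refine mul_le_of_le_one_right (by positivity) ?_
    rw [div_le_one hm1]
    linarith
  calc _ ≤ (P ^ ((2 : ℝ) / ((m : ℝ) + 1))) ^ (((m : ℝ) + 1) / (2 * (m : ℝ))) :=
        Real.rpow_le_rpow (Finset.sum_nonneg fun i _ => by positivity) hmain (by positivity)
    _ = P ^ ((1 : ℝ) / m) := by
        rw [← Real.rpow_mul hP0]
        congr 1
        field_simp
    _ = _ := (Real.finset_prod_rpow _ _ (fun k _ => hA0 k) _).symm
end
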